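/- arXiv:2208.02054 — 8 statements merged into one kernel-verified Lean document; each statement's English description precedes it below -/
import Mathlib

section
/- Let N ≥ 1 and for j = 1, …, N define a⁰_j = ((N−j+2)·sin(πj/(N+1)) − (N−j+1)·sin(π(j−1)/(N+1))) / ((N+1)·sin(π/(N+1))). Then a⁰_1 = 1, the trigonometric polynomial ∑_{j=1}^{N} a⁰_j·cos((2j−1)t) is nonnegative for all t ∈ [0, π/2], and ∑_{j=1}^{N} (−1)^{j+1} a⁰_j = 1/(2·cos²(π/(2N+2))). -/
open Real Finset

/-- numerator of the tail series -/
noncomputable def tailR (z c m x y : ℂ) : ℂ :=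
  (m * y - (m - 1) * x) * z
  + (((m - 1) * (2 * c * y - x) - (m - 2) * y) - 4 * c * (m * y - (m - 1) * x)) * z ^ 2
  + (((m - 2) * (2 * c * (2 * c * y - x) - y) - (m - 3) * (2 * c * y - x))
      - 4 * c * ((m - 1) * (2 * c * y - x) - (m - 2) * y)
      + (4 * c ^ 2 + 2) * (m * y - (m - 1) * x)) * z ^ 3
  + (((m - 3) * (2 * c * (2 * c * (2 * c * y - x) - y) - (2 * c * y - x))
        - (m - 4) * (2 * c * (2 * c * y - x) - y))
      - 4 * c * ((m - 2) * (2 * c * (2 * c * y - x) - y) - (m - 3) * (2 * c * y - x))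
      + (4 * c ^ 2 + 2) * ((m - 1) * (2 * c * y - x) - (m - 2) * y)
      - 4 * c * (m * y - (m - 1) * x)) * z ^ 4

lemma tailR_step (z c m x y : ℂ) :
    (z ^ 2 - 2 * z * c + 1) ^ 2 * ((m * y - (m - 1) * x) * z)
      + z * tailR z c (m - 1) y (2 * c * y - x) = tailR z c m x y := by
  unfold tailR
  ring

lemma partial_sum (z c M : ℂ) (s : ℕ → ℂ) (hs : ∀ k, s (k + 2) = 2 * c * s (k + 1) - s k)
    (n : ℕ) :
    (z ^ 2 - 2 * z * c + 1) ^ 2 *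
      ∑ k ∈ Finset.range n, ((M - k) * s (k + 1) - (M - k - 1) * s k) * z ^ (k + 1)
    = tailR z c M (s 0) (s 1) - z ^ n * tailR z c (M - n) (s n) (s (n + 1)) := by
  induction n with
  | zero => simp
  | succ n ih =>
    rw [Finset.sum_range_succ, mul_add, ih, ← tailR_step z c (M - n) (s n) (s (n + 1)), hs n]
    push_cast
    rw [show M - ((n : ℂ) + 1) = M - n - 1 by ring]
    ring

lemma closed_form (N : ℕ) (θ : ℝ) (hθ : ((N : ℝ) + 1) * θ = π) (z : ℂ) :
    (z ^ 2 - 2 * z * (Real.cos θ : ℂ) + 1) ^ 2 *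
      ∑ k ∈ Finset.range N, (((((N : ℝ) + 1 - k) * Real.sin ((k + 1) * θ)
        - ((N : ℝ) + 1 - k - 1) * Real.sin (k * θ) : ℝ)) : ℂ) * z ^ (k + 1)
    = (Real.sin θ : ℂ) * (((N : ℂ) + 1) * z * (1 - z) * (z ^ 2 - 2 * z * (Real.cos θ : ℂ) + 1)
      + 2 * (1 - (Real.cos θ : ℂ)) * z ^ 2 * (1 + z) * (1 + z ^ (N + 1))) := by
  have h := partial_sum z (Real.cos θ : ℂ) ((N : ℂ) + 1)
    (fun k => ((Real.sin (k * θ) : ℝ) : ℂ)) (by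
      intro k
      have hr : Real.sin (((k + 2 : ℕ) : ℝ) * θ) =
          2 * Real.cos θ * Real.sin (((k + 1 : ℕ) : ℝ) * θ) - Real.sin ((k : ℝ) * θ) := by
        push_cast
        have e1 : ((k : ℝ) + 2) * θ = (k + 1) * θ + θ := by ring
        have e2 : (k : ℝ) * θ = (k + 1) * θ - θ := by ring
        rw [e1, e2, Real.sin_add, Real.sin_sub]
        ring
      simp only [hr]
      rw [Complex.ofReal_sub, Complex.ofReal_mul, Complex.ofReal_mul, Complex.ofReal_ofNat]) N
  have hN1 : Real.sin ((N : ℝ) * θ) = Real.sin θ := by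
    rw [show (N : ℝ) * θ = π - θ by linarith, Real.sin_pi_sub]
  have hN2 : Real.sin (((N + 1 : ℕ) : ℝ) * θ) = 0 := by
    push_cast
    rw [hθ, Real.sin_pi]
  simp only [hN1, hN2] at h
  have h2 : ∀ k : ℕ, ((((N : ℝ) + 1 - k) * Real.sin ((k + 1) * θ)
        - ((N : ℝ) + 1 - k - 1) * Real.sin (k * θ) : ℝ) : ℂ) =
      ((N : ℂ) + 1 - k) * (Real.sin (((k + 1 : ℕ) : ℝ) * θ) : ℝ)
       - ((N : ℂ) + 1 - k - 1) * (Real.sin ((k : ℝ) * θ) : ℝ) := by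
    intro k
    push_cast
    ring
  simp only [h2]
  rw [h]
  unfold tailR
  simp only [Nat.cast_zero, zero_mul, Real.sin_zero, Complex.ofReal_zero, Nat.cast_one, one_mul,
    Complex.ofReal_one]
  ring

/-- the cosine polynomial identity -/
lemma cos_identity (N : ℕ) (θ : ℝ) (hθ : ((N : ℝ) + 1) * θ = π) (t : ℝ) :
    (Real.cos (2 * t) - Real.cos θ) ^ 2 *
      ∑ k ∈ Finset.range N, (((N : ℝ) + 1 - k) * Real.sin ((k + 1) * θ)
        - ((N : ℝ) + 1 - k - 1) * Real.sin (k * θ)) * Real.cos ((2 * k + 1) * t)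
    = Real.sin θ * (1 - Real.cos θ) * Real.cos t * (1 + Real.cos (2 * (N + 1) * t)) := by
  set u : ℂ := Complex.exp (t * Complex.I) with hu
  set v : ℂ := Complex.exp (-(t * Complex.I)) with hv
  have huv : u * v = 1 := by rw [hu, hv, ← Complex.exp_add]; simp
  have hu0 : u ≠ 0 := Complex.exp_ne_zero _
  have h := closed_form N θ hθ (u ^ 2)
  have hcos : (Real.cos t : ℂ) * 2 = u + v := by
    rw [Complex.ofReal_cos, Complex.cos, hu, hv]; ring_nf
  have hsin : (Real.sin t : ℂ) * 2 * Complex.I = u - v := by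
    rw [Complex.ofReal_sin, Complex.sin, hu, hv]
    ring_nf
    rw [Complex.I_sq]; ring
  have hcos2 : (Real.cos (2 * t) : ℂ) * 2 = u ^ 2 + v ^ 2 := by
    rw [Complex.ofReal_cos, Complex.cos, hu, hv, ← Complex.exp_nat_mul, ← Complex.exp_nat_mul]
    push_cast
    ring_nf
  have hP : (u ^ 2) ^ 2 - 2 * u ^ 2 * (Real.cos θ : ℂ) + 1
      = 2 * u ^ 2 * ((Real.cos (2 * t) : ℂ) - Real.cos θ) := by
    linear_combination (-u ^ 2) * hcos2 - (1 + u * v) * huv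
  rw [hP] at h
  set D : ℂ := (Real.cos (2 * t) : ℂ) - Real.cos θ with hD
  have key : D ^ 2 * ∑ k ∈ Finset.range N, (((((N : ℝ) + 1 - k) * Real.sin ((k + 1) * θ)
        - ((N : ℝ) + 1 - k - 1) * Real.sin (k * θ) : ℝ)) : ℂ) * u ^ (2 * k + 1)
      = (Real.sin θ : ℂ) * (-((N : ℂ) + 1) * D * (Real.sin t * Complex.I)
        + (1 - (Real.cos θ : ℂ)) * Real.cos t * (1 + u ^ (2 * (N + 1)))) := by
    have hsum : ∑ k ∈ Finset.range N, (((((N : ℝ) + 1 - k) * Real.sin ((k + 1) * θ)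
        - ((N : ℝ) + 1 - k - 1) * Real.sin (k * θ) : ℝ)) : ℂ) * (u ^ 2) ^ (k + 1)
        = u * ∑ k ∈ Finset.range N, (((((N : ℝ) + 1 - k) * Real.sin ((k + 1) * θ)
        - ((N : ℝ) + 1 - k - 1) * Real.sin (k * θ) : ℝ)) : ℂ) * u ^ (2 * k + 1) := by
      rw [Finset.mul_sum]
      refine Finset.sum_congr rfl fun k _ => ?_
      ring
    rw [hsum, ← pow_mul u 2 (N + 1)] at h
    have e1 : 1 - u ^ 2 = -(u * (Real.sin t * 2 * Complex.I)) := by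
      rw [hsin]; linear_combination -huv
    have e2 : 1 + u ^ 2 = u * (Real.cos t * 2) := by
      rw [hcos]; linear_combination -huv
    rw [e1, e2] at h
    have h5 : (4 * u ^ 5) ≠ 0 := mul_ne_zero (by norm_num) (pow_ne_zero _ hu0)
    apply mul_left_cancel₀ h5
    linear_combination h
  have hre : ∀ n : ℕ, (u ^ n).re = Real.cos (n * t) := by
    intro n
    rw [hu, ← Complex.exp_nat_mul, show (n : ℂ) * (t * Complex.I) = ((n * t : ℝ) : ℂ) * Complex.I by
      push_cast; ring, Complex.exp_ofReal_mul_I_re]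
  have key2 := congrArg Complex.re key
  have hDr : D = ((Real.cos (2 * t) - Real.cos θ : ℝ) : ℂ) := by rw [hD]; push_cast; ring
  rw [hDr, ← Complex.ofReal_pow, Complex.re_ofReal_mul, Complex.re_ofReal_mul, Complex.re_sum,
    Complex.add_re] at key2
  have g1 : (-((N : ℂ) + 1) * ((Real.cos (2 * t) - Real.cos θ : ℝ) : ℂ)
      * (Real.sin t * Complex.I)).re = 0 := by
    rw [show (-((N : ℂ) + 1) * ((Real.cos (2 * t) - Real.cos θ : ℝ) : ℂ)
      * (Real.sin t * Complex.I)) = ((-((N : ℝ) + 1) * (Real.cos (2 * t) - Real.cos θ)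
      * Real.sin t : ℝ) : ℂ) * Complex.I by push_cast; ring, Complex.re_ofReal_mul]
    simp
  have g2 : ((1 - (Real.cos θ : ℂ)) * Real.cos t * (1 + u ^ (2 * (N + 1)))).re
      = (1 - Real.cos θ) * Real.cos t * (1 + Real.cos (2 * (N + 1) * t)) := by
    rw [show (1 - (Real.cos θ : ℂ)) * Real.cos t = (((1 - Real.cos θ) * Real.cos t : ℝ) : ℂ) by
      push_cast; ring, Complex.re_ofReal_mul, Complex.add_re, hre]
    push_cast
    simp
  rw [g1, g2] at key2
  simp only [Complex.re_ofReal_mul, hre] at key2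
  push_cast at key2
  rw [key2]
  ring

theorem extremal_coeffs_properties (N : ℕ) (hN : 1 ≤ N) (a0 : ℕ → ℝ)
    (ha0 : ∀ j, a0 j =
      (((N : ℝ) - j + 2) * Real.sin (π * j / (N + 1)) -
        ((N : ℝ) - j + 1) * Real.sin (π * (j - 1) / (N + 1))) /
      ((N + 1) * Real.sin (π / (N + 1)))) :
    a0 1 = 1 ∧
    (∀ t ∈ Set.Icc (0 : ℝ) (π / 2),
      0 ≤ ∑ j ∈ Finset.Icc 1 N, a0 j * Real.cos ((2 * (j : ℝ) - 1) * t)) ∧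
    ∑ j ∈ Finset.Icc 1 N, (-1 : ℝ) ^ (j + 1) * a0 j =
      1 / (2 * Real.cos (π / (2 * N + 2)) ^ 2) := by
  have hM : (0 : ℝ) < (N : ℝ) + 1 := by positivity
  have hN' : (1 : ℝ) ≤ N := by exact_mod_cast hN
  obtain ⟨θ, hθd⟩ : ∃ θ : ℝ, θ = π / (N + 1) := ⟨_, rfl⟩
  have hθ : ((N : ℝ) + 1) * θ = π := by rw [hθd]; field_simp
  have hθ0 : 0 < θ := by rw [hθd]; positivity
  have hθ2 : θ ≤ π / 2 := by nlinarith
  have hpi := Real.pi_pos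
  have hsin : 0 < Real.sin θ := Real.sin_pos_of_pos_of_lt_pi hθ0 (by linarith)
  have hK : 0 < ((N : ℝ) + 1) * Real.sin θ := by positivity
  have ha : ∀ k : ℕ, a0 (k + 1) = (((N : ℝ) + 1 - k) * Real.sin ((k + 1) * θ)
        - ((N : ℝ) + 1 - k - 1) * Real.sin (k * θ)) / (((N : ℝ) + 1) * Real.sin θ) := by
    intro k
    rw [ha0, ← hθd]
    push_cast
    rw [show π * ((k : ℝ) + 1) / (N + 1) = (k + 1) * θ by rw [hθd]; ring,
      show π * ((k : ℝ) + 1 - 1) / (N + 1) = k * θ by rw [hθd]; ring]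
    ring
  have hre : ∀ f : ℕ → ℝ, ∑ j ∈ Finset.Icc 1 N, f j = ∑ k ∈ Finset.range N, f (k + 1) := by
    intro f
    rw [Finset.range_eq_Ico, Finset.sum_Ico_add' f 0 N 1]
    rfl
  refine ⟨?_, ?_, ?_⟩
  · have := ha 0
    simp only [Nat.cast_zero, zero_add, sub_zero, one_mul, zero_mul, Real.sin_zero, mul_zero]
      at this
    rw [this, div_self hK.ne']
  · set F : ℝ → ℝ := fun t => ∑ j ∈ Finset.Icc 1 N, a0 j * Real.cos ((2 * (j : ℝ) - 1) * t)
      with hF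
    have hFc : Continuous F := by
      rw [hF]; fun_prop
    have hid : ∀ t, (Real.cos (2 * t) - Real.cos θ) ^ 2 * ((((N : ℝ) + 1) * Real.sin θ) * F t)
        = Real.sin θ * (1 - Real.cos θ) * Real.cos t * (1 + Real.cos (2 * (N + 1) * t)) := by
      intro t
      rw [← cos_identity N θ hθ t]
      congr 1
      simp only [hF]
      rw [hre, Finset.mul_sum]
      refine Finset.sum_congr rfl fun k _ => ?_
      rw [ha k]
      push_cast
      rw [show 2 * ((k : ℝ) + 1) - 1 = 2 * k + 1 by ring]
      field_simp
    have hpos : ∀ t ∈ Set.Icc (0 : ℝ) (π / 2), Real.cos (2 * t) ≠ Real.cos θ → 0 ≤ F t := by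
      intro t ht hne
      have h1 : 0 ≤ Real.cos t := Real.cos_nonneg_of_mem_Icc ⟨by linarith [ht.1], ht.2⟩
      have h2 : 0 ≤ 1 + Real.cos (2 * (N + 1) * t) := by
        linarith [Real.neg_one_le_cos (2 * (N + 1) * t)]
      have h3 : 0 ≤ 1 - Real.cos θ := by linarith [Real.cos_le_one θ]
      have h4 : 0 < (Real.cos (2 * t) - Real.cos θ) ^ 2 := by
        have := sub_ne_zero.mpr hne
        positivity
      have h5 : 0 ≤ (Real.cos (2 * t) - Real.cos θ) ^ 2 *
          ((((N : ℝ) + 1) * Real.sin θ) * F t) := by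
        rw [hid]; positivity
      exact nonneg_of_mul_nonneg_right (nonneg_of_mul_nonneg_right h5 h4) hK
    intro t ht
    by_cases hne : Real.cos (2 * t) = Real.cos θ
    · have htθ : 2 * t = θ := Real.injOn_cos ⟨by linarith [ht.1], by linarith [ht.2]⟩
        ⟨hθ0.le, by linarith⟩ hne
      have htend : Filter.Tendsto F (nhdsWithin t (Set.Ioi t)) (nhds (F t)) :=
        hFc.continuousAt.tendsto.mono_left nhdsWithin_le_nhds
      refine ge_of_tendsto htend ?_
      filter_upwards [Ioo_mem_nhdsGT (show t < π / 2 by linarith)] with s hs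
      refine hpos s ⟨by linarith [ht.1, hs.1], hs.2.le⟩ ?_
      intro hh
      have : 2 * s = θ := Real.injOn_cos ⟨by linarith [ht.1, hs.1], by linarith [hs.2]⟩
        ⟨hθ0.le, by linarith⟩ hh
      linarith [hs.1]
    · exact hpos t ht hne
  · have h := closed_form N θ hθ (-1)
    have hc : 0 < 1 + Real.cos θ := by
      have := Real.cos_nonneg_of_mem_Icc (x := θ) ⟨by linarith, hθ2⟩
      linarith
    have hhalf : 2 * Real.cos (π / (2 * N + 2)) ^ 2 = 1 + Real.cos θ := by
      have : θ = 2 * (π / (2 * N + 2)) := by rw [hθd]; field_simp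
      rw [this, Real.cos_two_mul]; ring
    rw [hhalf, hre]
    have h' : ((-1 : ℝ) ^ 2 - 2 * (-1) * Real.cos θ + 1) ^ 2 *
      ∑ k ∈ Finset.range N, (((N : ℝ) + 1 - k) * Real.sin ((k + 1) * θ)
        - ((N : ℝ) + 1 - k - 1) * Real.sin (k * θ)) * (-1) ^ (k + 1)
      = Real.sin θ * (((N : ℝ) + 1) * (-1) * (1 - (-1)) * ((-1) ^ 2 - 2 * (-1) * Real.cos θ + 1)
      + 2 * (1 - Real.cos θ) * (-1) ^ 2 * (1 + (-1)) * (1 + (-1) ^ (N + 1))) := by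
      have := h
      exact_mod_cast this
    have hS : ∑ k ∈ Finset.range N, (-1 : ℝ) ^ (k + 1 + 1) * a0 (k + 1)
        = -(∑ k ∈ Finset.range N, (((N : ℝ) + 1 - k) * Real.sin ((k + 1) * θ)
        - ((N : ℝ) + 1 - k - 1) * Real.sin (k * θ)) * (-1) ^ (k + 1)) /
          (((N : ℝ) + 1) * Real.sin θ) := by
      rw [← Finset.sum_neg_distrib, Finset.sum_div]
      refine Finset.sum_congr rfl fun k _ => ?_
      rw [ha k]
      ring
    rw [hS, div_eq_div_iff hK.ne' hc.ne']
    have h4 : (4 * (1 + Real.cos θ)) ≠ 0 := by positivity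
    apply mul_left_cancel₀ h4
    linear_combination -h'
end

section
/- Let N ≥ 1 and let a_1, …, a_N be real numbers with a_1 = 1 such that ∑_{j=1}^{N} a_j·cos((2j−1)t) ≥ 0 for all t ∈ [0, π/2]. If equality ∑_{j=1}^{N} (−1)^{j+1} a_j = 1/(2·cos²(π/(2N+2))) holds, then for every j = 1, …, N one has a_j = a⁰_j, where a⁰_j = ((N−j+2)·sin(πj/(N+1)) − (N−j+1)·sin(π(j−1)/(N+1))) / ((N+1)·sin(π/(N+1))). -/
open Real Finset

/-- Cosine sums over the nodes `(2m+1)π/M` vanish. -/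
lemma node_sum_zero (M : ℕ) (hM : 0 < M) (x : ℝ) (hx : sin (x * (π / M)) ≠ 0)
    (hx2 : sin (x * (2 * π)) = 0) :
    ∑ m ∈ range M, cos (x * ((2 * (m : ℝ) + 1) * (π / M))) = 0 := by
  have key : ∀ n : ℕ, 2 * sin (x * (π / M)) *
      ∑ m ∈ range n, cos (x * ((2 * (m : ℝ) + 1) * (π / M))) = sin (x * (2 * n * (π / M))) := by
    intro n
    induction n with
    | zero => simp
    | succ n ih =>
      rw [sum_range_succ, mul_add, ih]
      have e1 : x * (2 * n * (π / M)) = x * ((2 * (n : ℝ) + 1) * (π / M)) - x * (π / M) := by ring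
      have e2 : x * (2 * ((n + 1 : ℕ) : ℝ) * (π / M))
          = x * ((2 * (n : ℝ) + 1) * (π / M)) + x * (π / M) := by push_cast; ring
      rw [e1, e2, sin_sub, sin_add]; ring
  have h := key M
  have hM' : (M : ℝ) ≠ 0 := by positivity
  have e : x * (2 * M * (π / M)) = x * (2 * π) := by field_simp
  rw [e, hx2] at h
  rcases mul_eq_zero.1 h with h | h
  · exact absurd h (by simpa using hx)
  · exact h

lemma node_int (M : ℕ) (hM : 0 < M) (j : ℤ) (h1 : -(M : ℤ) < j) (h2 : j < 2 * M) :
    ∑ m ∈ range M, cos ((j : ℝ) * ((2 * (m : ℝ) + 1) * (π / M))) =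
      (if j = 0 then (M : ℝ) else 0) - (if j = M then (M : ℝ) else 0) := by
  have hM' : (M : ℝ) ≠ 0 := by positivity
  by_cases hj0 : j = 0
  · have : (0 : ℤ) ≠ M := by omega
    simp [hj0, this]
  by_cases hjM : j = M
  · subst hjM
    have : ∀ m : ℕ, cos (((M : ℤ) : ℝ) * ((2 * (m : ℝ) + 1) * (π / M))) = -1 := by
      intro m
      have e : ((M : ℤ) : ℝ) * ((2 * (m : ℝ) + 1) * (π / M)) = π + m * (2 * π) := by
        push_cast; field_simp; ring
      rw [e, cos_add_nat_mul_two_pi, cos_pi]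
    simp only [this]
    simp [hM.ne']
  rw [if_neg hj0, if_neg hjM, sub_zero]
  apply node_sum_zero M hM
  · intro h
    rw [sin_eq_zero_iff] at h
    obtain ⟨n, hn⟩ := h
    have : (n : ℝ) * M = j := by
      have hp := pi_ne_zero
      field_simp at hn
      exact hn
    have h3 : n * (M : ℤ) = j := by exact_mod_cast this
    have hn1 : -1 < n := by nlinarith
    have hn2 : n < 2 := by nlinarith
    have : n = 0 ∨ n = 1 := by omega
    rcases this with rfl | rfl
    · exact hj0 (by simpa using h3.symm)
    · exact hjM (by simpa using h3.symm)
  · rw [sin_eq_zero_iff]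
    exact ⟨2 * j, by push_cast; ring⟩

lemma orth_cos (M : ℕ) (k l : ℕ) (hk : 1 ≤ k) (hkM : k < M) (hl : l < M) :
    ∑ m ∈ range M, cos ((l : ℝ) * ((2 * (m : ℝ) + 1) * (π / M))) *
        cos ((k : ℝ) * ((2 * (m : ℝ) + 1) * (π / M))) =
      ((if l = k then (M : ℝ) else 0) - (if l = M - k then (M : ℝ) else 0)) / 2 := by
  have h1 := node_int M (by omega) ((l : ℤ) + k) (by omega) (by omega)
  have h2 := node_int M (by omega) ((l : ℤ) - k) (by omega) (by omega)
  rw [if_neg (by omega)] at h1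
  rw [if_neg (c := (l : ℤ) - k = M) (by omega)] at h2
  have e1 : ((l : ℤ) + k = M) ↔ l = M - k := by omega
  have e2 : ((l : ℤ) - k = 0) ↔ l = k := by omega
  simp only [e1] at h1
  simp only [e2] at h2
  have : ((if l = k then (M : ℝ) else 0) - (if l = M - k then (M : ℝ) else 0)) =
    ((if l = k then (M : ℝ) else 0) - 0) + (0 - (if l = M - k then (M : ℝ) else 0)) := by ring
  rw [this, ← h1, ← h2, ← sum_add_distrib, sum_div]
  refine sum_congr rfl fun m _ => ?_
  push_cast
  rw [add_mul (l : ℝ), sub_mul (l : ℝ), cos_add, cos_sub]; ring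

lemma orth_sin (M : ℕ) (k l : ℕ) (hk : 1 ≤ k) (hkM : k < M) (hl : l < M) :
    ∑ m ∈ range M, sin ((l : ℝ) * ((2 * (m : ℝ) + 1) * (π / M))) *
        sin ((k : ℝ) * ((2 * (m : ℝ) + 1) * (π / M))) =
      ((if l = k then (M : ℝ) else 0) + (if l = M - k then (M : ℝ) else 0)) / 2 := by
  have h1 := node_int M (by omega) ((l : ℤ) + k) (by omega) (by omega)
  have h2 := node_int M (by omega) ((l : ℤ) - k) (by omega) (by omega)
  rw [if_neg (by omega)] at h1
  rw [if_neg (c := (l : ℤ) - k = M) (by omega)] at h2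
  have e1 : ((l : ℤ) + k = M) ↔ l = M - k := by omega
  have e2 : ((l : ℤ) - k = 0) ↔ l = k := by omega
  simp only [e1] at h1
  simp only [e2] at h2
  have : ((if l = k then (M : ℝ) else 0) + (if l = M - k then (M : ℝ) else 0)) =
    ((if l = k then (M : ℝ) else 0) - 0) - (0 - (if l = M - k then (M : ℝ) else 0)) := by ring
  rw [this, ← h1, ← h2, ← sum_sub_distrib, sum_div]
  refine sum_congr rfl fun m _ => ?_
  push_cast
  rw [add_mul (l : ℝ), sub_mul (l : ℝ), cos_add, cos_sub]; ring

/-- The cosine polynomial with coefficients `B`. -/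
noncomputable def GG (M : ℕ) (B : ℕ → ℝ) (x : ℝ) : ℝ :=
  -B 0 + 2 * ∑ l ∈ range M, B l * cos (l * x)

/-- Its derivative. -/
noncomputable def GD (M : ℕ) (B : ℕ → ℝ) (x : ℝ) : ℝ :=
  -2 * ∑ l ∈ range M, l * B l * sin (l * x)

lemma GG_deriv (M : ℕ) (B : ℕ → ℝ) (x : ℝ) : HasDerivAt (GG M B) (GD M B x) x := by
  unfold GG GD
  have h : ∀ l ∈ range M, HasDerivAt (fun x : ℝ => B l * cos (l * x))
      (B l * (-sin (l * x) * (l * 1))) x := fun l _ =>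
    (((hasDerivAt_id x).const_mul (l : ℝ)).cos).const_mul (B l)
  have h2 := ((HasDerivAt.fun_sum h).const_mul 2).const_add (-B 0)
  have e : -2 * ∑ l ∈ range M, l * B l * sin (l * x) =
      2 * ∑ l ∈ range M, B l * (-sin (l * x) * (l * 1)) := by
    rw [mul_sum, mul_sum]
    exact sum_congr rfl fun l _ => by ring
  rw [e]
  exact h2

lemma GG_sum_zero (M : ℕ) (B : ℕ → ℝ) (hM : 0 < M) :
    ∑ m ∈ range M, GG M B ((2 * (m : ℝ) + 1) * (π / M)) = M * B 0 := by
  unfold GG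
  rw [sum_add_distrib, ← mul_sum, sum_comm]
  have : ∀ l ∈ range M, ∑ m ∈ range M, B l * cos ((l : ℝ) * ((2 * (m : ℝ) + 1) * (π / M))) =
      if l = 0 then B l * M else 0 := by
    intro l hl
    rw [mem_range] at hl
    have := node_int M hM l (by omega) (by omega)
    rw [if_neg (c := (l : ℤ) = M) (by omega)] at this
    push_cast at this
    rw [← mul_sum, this]
    simp
  rw [sum_congr rfl this]
  simp [hM]
  ring

lemma GG_sum_cos (M : ℕ) (B : ℕ → ℝ) (k : ℕ) (hk : 1 ≤ k) (hkM : k < M) :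
    ∑ m ∈ range M, GG M B ((2 * (m : ℝ) + 1) * (π / M)) *
      cos ((k : ℝ) * ((2 * (m : ℝ) + 1) * (π / M))) = M * (B k - B (M - k)) := by
  unfold GG
  simp only [add_mul, sum_add_distrib, mul_assoc, ← mul_sum, sum_mul]
  have h0 := node_int M (by omega) k (by omega) (by omega)
  rw [if_neg (by omega), if_neg (by omega)] at h0
  push_cast at h0
  simp only [add_mul, mul_assoc] at h0
  rw [h0, sum_comm]
  have : ∀ l ∈ range M, ∑ m ∈ range M, B l * (cos ((l : ℝ) * (2 * ((m : ℝ) * (π / M)) + 1 * (π / M))) *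
      cos ((k : ℝ) * (2 * ((m : ℝ) * (π / M)) + 1 * (π / M)))) =
      (if l = k then B l * M / 2 else 0) - (if l = M - k then B l * M / 2 else 0) := by
    intro l hl
    rw [mem_range] at hl
    have := orth_cos M k l hk hkM hl
    simp only [add_mul, mul_assoc] at this
    rw [← mul_sum, this]
    split_ifs <;> ring
  rw [sum_congr rfl this, sum_sub_distrib, sum_ite_eq', sum_ite_eq', if_pos (mem_range.2 hkM),
    if_pos (mem_range.2 (by omega))]
  ring

lemma GD_sum_sin (M : ℕ) (B : ℕ → ℝ) (k : ℕ) (hk : 1 ≤ k) (hkM : k < M) :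
    ∑ m ∈ range M, GD M B ((2 * (m : ℝ) + 1) * (π / M)) *
      sin ((k : ℝ) * ((2 * (m : ℝ) + 1) * (π / M))) =
        -(M * (k * B k + (M - k) * B (M - k))) := by
  unfold GD
  simp only [mul_assoc, ← mul_sum, sum_mul]
  rw [sum_comm]
  have : ∀ l ∈ range M, ∑ m ∈ range M, (l : ℝ) * (B l * (sin ((l : ℝ) * ((2 * (m : ℝ) + 1) * (π / M))) *
      sin ((k : ℝ) * ((2 * (m : ℝ) + 1) * (π / M))))) =
      (if l = k then l * B l * M / 2 else 0) + (if l = M - k then l * B l * M / 2 else 0) := by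
    intro l hl
    rw [mem_range] at hl
    have := orth_sin M k l hk hkM hl
    rw [← mul_sum, ← mul_sum, this]
    split_ifs <;> ring
  rw [sum_congr rfl this, sum_add_distrib, sum_ite_eq', sum_ite_eq', if_pos (mem_range.2 hkM),
    if_pos (mem_range.2 (by omega)), Nat.cast_sub hkM.le]
  ring

lemma GG_cos_eq (M : ℕ) (B : ℕ → ℝ) (x y : ℝ) (h : cos x = cos y) : GG M B x = GG M B y := by
  unfold GG
  have : ∀ l : ℕ, cos (l * x) = cos (l * y) := by
    intro l
    have h1 := Polynomial.Chebyshev.T_real_cos x l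
    have h2 := Polynomial.Chebyshev.T_real_cos y l
    rw [h] at h1
    rw [h1] at h2
    exact_mod_cast h2
  simp only [this]

/-- Splitting of a sum over `range (n+2)` whose middle terms vanish. -/
lemma sum_ends (n : ℕ) (f : ℕ → ℝ) (h : ∀ m < n, f (m + 1) = 0) :
    ∑ m ∈ range (n + 2), f m = f 0 + f (n + 1) := by
  rw [sum_range_succ, sum_range_succ', sum_eq_zero (fun m hm => h m (mem_range.1 hm))]
  ring

lemma factor_C (a B : ℕ → ℝ) (hab : ∀ k, a (k + 1) = B k + B (k + 1)) (t : ℝ) (n : ℕ) :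
    ∑ j ∈ Finset.Icc 1 n, a j * cos ((2 * (j : ℝ) - 1) * t) =
      cos t * GG (n + 1) B (2 * t) - B n * cos ((2 * n + 1) * t) := by
  unfold GG
  induction n with
  | zero => simp; ring
  | succ n ih =>
    rw [sum_Icc_succ_top (by omega), ih, sum_range_succ _ (n + 1), hab]
    have e1 : (2 * ((n + 1 : ℕ) : ℝ) - 1) * t = ((n + 1 : ℕ) : ℝ) * (2 * t) - t := by ring
    have e2 : (2 * ((n + 1 : ℕ) : ℝ) + 1) * t = ((n + 1 : ℕ) : ℝ) * (2 * t) + t := by ring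
    have e3 : (2 * (n : ℝ) + 1) * t = ((n + 1 : ℕ) : ℝ) * (2 * t) - t := by push_cast; ring
    rw [e1, e2, e3, cos_sub, cos_add]; ring

lemma GG_nonneg (M : ℕ) (B : ℕ → ℝ)
    (h : ∀ t ∈ Set.Icc (0 : ℝ) (π / 2), 0 ≤ cos t * GG M B (2 * t)) (x : ℝ) : 0 ≤ GG M B x := by
  have hp := pi_pos
  have h1 : Set.Ico (0 : ℝ) π ⊆ {x | 0 ≤ GG M B x} := by
    intro y hy
    have h2 := h (y / 2) ⟨by linarith [hy.1], by linarith [hy.2]⟩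
    have hc : 0 < cos (y / 2) := cos_pos_of_mem_Ioo ⟨by linarith [hy.1], by linarith [hy.2]⟩
    have e : 2 * (y / 2) = y := by ring
    rw [e] at h2
    exact nonneg_of_mul_nonneg_right h2 hc
  have hcont : Continuous (GG M B) := by unfold GG; fun_prop
  have h3 := closure_minimal h1 (isClosed_le continuous_const hcont)
  rw [closure_Ico hp.ne] at h3
  rw [GG_cos_eq M B x (arccos (cos x)) (cos_arccos (neg_one_le_cos x) (cos_le_one x)).symm]
  exact h3 ⟨arccos_nonneg _, arccos_le_pi _⟩

/-- Determination of the coefficients `B` (with `N = n+1`, `M = n+2`). -/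
lemma B_formula (n : ℕ) (B : ℕ → ℝ) (hpos : ∀ x, 0 ≤ GG (n + 2) B x) (hB : B (n + 1) = 0)
    (h1 : B 1 = B 0 * cos (π / (n + 2 : ℕ))) (k : ℕ) (hk : k ≤ n + 1) :
    ((n + 2 : ℕ) : ℝ) * sin (π / (n + 2 : ℕ)) * B k = B 0 * (cos (π / (n + 2 : ℕ)) *
      sin (k * (π / (n + 2 : ℕ))) + sin (π / (n + 2 : ℕ)) * ((n + 2 : ℕ) - k) *
      cos (k * (π / (n + 2 : ℕ)))) := by
  have hp := pi_pos
  have hMn : ((n + 2 : ℕ) : ℝ) = n + 2 := by push_cast; ring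
  have hM0 : (0 : ℝ) < ((n + 2 : ℕ) : ℝ) := by positivity
  set al : ℝ := π / (n + 2 : ℕ) with hal
  have hMal : ((n + 2 : ℕ) : ℝ) * al = π := by rw [hal]; field_simp
  have halpos : 0 < al := by positivity
  have hlast : ∀ k : ℕ, (k : ℝ) * ((2 * ((n + 1 : ℕ) : ℝ) + 1) * al) = k * (2 * π) - k * al := by
    intro k
    rw [← hMal]; push_cast; ring
  have hcosl : ∀ k : ℕ, cos ((k : ℝ) * ((2 * ((n + 1 : ℕ) : ℝ) + 1) * al)) = cos (k * al) := by
    intro k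
    rw [hlast, cos_nat_mul_two_pi_sub]
  have hsinl : ∀ k : ℕ, sin ((k : ℝ) * ((2 * ((n + 1 : ℕ) : ℝ) + 1) * al)) = -sin (k * al) := by
    intro k
    rw [hlast, sin_nat_mul_two_pi_sub]
  have hcos1 := hcosl 1
  simp only [Nat.cast_one, one_mul] at hcos1
  have hlt : ∀ m < n, cos ((2 * ((m + 1 : ℕ) : ℝ) + 1) * al) < cos al := by
    intro m hm
    have hm' : (m : ℝ) + 1 ≤ n := by exact_mod_cast hm
    have hm0 : (0 : ℝ) ≤ m := by positivity
    rcases le_total ((2 * ((m + 1 : ℕ) : ℝ) + 1) * al) π with hc | hc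
    · apply cos_lt_cos_of_nonneg_of_le_pi halpos.le hc
      push_cast
      nlinarith
    · rw [← cos_two_pi_sub]
      apply cos_lt_cos_of_nonneg_of_le_pi halpos.le (by linarith)
      rw [← hMal]
      push_cast
      nlinarith
  have hS0 := GG_sum_zero (n + 2) B (by omega)
  have hS1 := GG_sum_cos (n + 2) B 1 le_rfl (by omega)
  rw [← hal] at hS0 hS1
  have hsum : ∑ m ∈ range (n + 2), GG (n + 2) B ((2 * (m : ℝ) + 1) * al) *
      (cos al - cos ((2 * (m : ℝ) + 1) * al)) = 0 := by
    simp only [mul_sub, sum_sub_distrib, ← sum_mul]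
    simp only [Nat.cast_one, one_mul] at hS1
    rw [hS0, hS1, show n + 2 - 1 = n + 1 from rfl, hB, h1]; ring
  have hz : ∀ m < n, GG (n + 2) B ((2 * ((m + 1 : ℕ) : ℝ) + 1) * al) = 0 := by
    have hnn : ∀ m ∈ range (n + 2), 0 ≤ GG (n + 2) B ((2 * (m : ℝ) + 1) * al) *
        (cos al - cos ((2 * (m : ℝ) + 1) * al)) := by
      intro m hm
      apply mul_nonneg (hpos _)
      rw [mem_range] at hm
      rcases m with _ | m
      · simp
      · rcases Nat.lt_or_ge m n with h | h
        · linarith [hlt m h]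
        · have : m = n := by omega
          subst this
          rw [hcos1]; simp
    rw [sum_eq_zero_iff_of_nonneg hnn] at hsum
    intro m hm
    have := hsum (m + 1) (mem_range.2 (by omega))
    rcases mul_eq_zero.1 this with h | h
    · exact h
    · linarith [hlt m hm]
  have hz' : ∀ m < n, GD (n + 2) B ((2 * ((m + 1 : ℕ) : ℝ) + 1) * al) = 0 := by
    intro m hm
    have hmin : IsLocalMin (GG (n + 2) B) ((2 * ((m + 1 : ℕ) : ℝ) + 1) * al) := by
      apply Filter.Eventually.of_forall
      intro x
      rw [hz m hm]
      exact hpos x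
    exact hmin.hasDerivAt_eq_zero (GG_deriv _ _ _)
  have hGl : GG (n + 2) B ((2 * ((n + 1 : ℕ) : ℝ) + 1) * al) = GG (n + 2) B al :=
    GG_cos_eq _ _ _ _ hcos1
  have hDl : GD (n + 2) B ((2 * ((n + 1 : ℕ) : ℝ) + 1) * al) = -GD (n + 2) B al := by
    unfold GD
    simp only [hsinl, mul_neg, sum_neg_distrib]
  -- endpoint sums
  have hu : 2 * GG (n + 2) B al = (n + 2 : ℕ) * B 0 := by
    rw [← hS0, sum_ends n _ hz, hGl]
    simp; ring
  have hA : ∀ k : ℕ, 1 ≤ k → k < n + 2 → B k - B (n + 2 - k) = B 0 * cos (k * al) := by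
    intro k hk1 hk2
    have h := GG_sum_cos (n + 2) B k hk1 hk2
    rw [← hal, sum_ends n _ (fun m hm => by rw [hz m hm, zero_mul]), hGl, hcosl] at h
    simp only [Nat.cast_zero, mul_zero, zero_add, one_mul] at h
    apply mul_left_cancel₀ hM0.ne'
    rw [← h]
    linear_combination cos (k * al) * hu
  have hD : ∀ k : ℕ, 1 ≤ k → k < n + 2 → ((n + 2 : ℕ) : ℝ) *
      (k * B k + ((n + 2 : ℕ) - k) * B (n + 2 - k)) = -2 * GD (n + 2) B al * sin (k * al) := by
    intro k hk1 hk2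
    have h := GD_sum_sin (n + 2) B k hk1 hk2
    rw [← hal, sum_ends n _ (fun m hm => by rw [hz' m hm, zero_mul]), hDl, hsinl] at h
    simp only [Nat.cast_zero, mul_zero, zero_add, one_mul] at h
    linarith [h]
  have hD1 := hD 1 le_rfl (by omega)
  rw [show n + 2 - 1 = n + 1 from rfl, hB, h1] at hD1
  simp only [Nat.cast_one, one_mul, mul_zero, add_zero] at hD1
  rcases Nat.eq_zero_or_pos k with rfl | hk1
  · simp; ring
  · have a1 := hA k hk1 (by omega)
    have a2 := hD k hk1 (by omega)
    apply mul_left_cancel₀ hM0.ne'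
    linear_combination sin al * a2 - sin (k * al) * hD1 +
      sin al * ((n + 2 : ℕ) : ℝ) * (((n + 2 : ℕ) : ℝ) - k) * a1

theorem extremizer_unique (N : ℕ) (hN : 1 ≤ N) (a : ℕ → ℝ)
    (ha1 : a 1 = 1)
    (hpos : ∀ t ∈ Set.Icc (0 : ℝ) (π / 2),
      0 ≤ ∑ j ∈ Finset.Icc 1 N, a j * Real.cos ((2 * (j : ℝ) - 1) * t))
    (heq : ∑ j ∈ Finset.Icc 1 N, (-1 : ℝ) ^ (j + 1) * a j =
      1 / (2 * Real.cos (π / (2 * N + 2)) ^ 2)) :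
    ∀ j ∈ Finset.Icc 1 N, a j =
      (((N : ℝ) - j + 2) * Real.sin (π * j / (N + 1)) -
        ((N : ℝ) - j + 1) * Real.sin (π * (j - 1) / (N + 1))) /
      ((N + 1) * Real.sin (π / (N + 1))) := by
  obtain ⟨n, rfl⟩ : ∃ n, N = n + 1 := ⟨N - 1, by omega⟩
  intro j hj
  rw [Finset.mem_Icc] at hj
  obtain ⟨i, rfl⟩ : ∃ i, j = i + 1 := ⟨j - 1, by omega⟩
  set V : ℝ := 1 / (2 * Real.cos (π / (2 * ((n + 1 : ℕ) : ℝ) + 2)) ^ 2) with hV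
  obtain ⟨B, hBdef⟩ : ∃ B : ℕ → ℝ, ∀ k, B k =
      (-1) ^ k * (V - ∑ j ∈ Finset.Icc 1 k, (-1 : ℝ) ^ (j + 1) * a j) := ⟨_, fun _ => rfl⟩
  have hab : ∀ k, a (k + 1) = B k + B (k + 1) := by
    intro k
    rw [hBdef, hBdef, sum_Icc_succ_top (by omega)]
    have : ((-1 : ℝ) ^ k) * (-1) ^ k = 1 := by rw [← mul_pow]; simp
    ring_nf
    rw [mul_comm k 2, pow_mul]; simp
  have hBN : B (n + 1) = 0 := by rw [hBdef, heq]; simp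
  have hB0 : B 0 = V := by rw [hBdef]; simp
  have hp := pi_pos
  have hMc : ((n + 2 : ℕ) : ℝ) = ((n + 1 : ℕ) : ℝ) + 1 := by push_cast; ring
  set al : ℝ := π / (n + 2 : ℕ) with hal
  have halpos : 0 < al := by positivity
  have hal2 : π / (2 * ((n + 1 : ℕ) : ℝ) + 2) = al / 2 := by
    rw [hal, hMc]; field_simp
  have halle : al ≤ π / 2 := by
    rw [hal]
    apply div_le_div_of_nonneg_left hp.le (by norm_num)
    push_cast
    have : (0 : ℝ) ≤ n := by positivity
    linarith
  have hc2 : 2 * cos (al / 2) ^ 2 = 1 + cos al := by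
    rw [cos_sq]; ring_nf
  have hcal : 0 ≤ cos al := cos_nonneg_of_mem_Icc ⟨by linarith, halle⟩
  have hV1 : V * (1 + cos al) = 1 := by
    rw [hV, hal2, hc2]
    field_simp
  have hsal : 0 < sin al := sin_pos_of_pos_of_lt_pi halpos (by linarith)
  have hB1 : B 1 = B 0 * cos al := by
    have := hab 0
    rw [zero_add, ha1, hB0] at this
    rw [hB0]; linarith
  have hG : ∀ x, 0 ≤ GG (n + 2) B x := by
    apply GG_nonneg
    intro t ht
    have := hpos t ht
    rw [factor_C a B hab t (n + 1), hBN] at this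
    simpa using this
  have f1 := B_formula n B hG hBN hB1 i (by omega)
  have f2 := B_formula n B hG hBN hB1 (i + 1) (by omega)
  rw [← hal] at f1 f2
  have e0 : π / (((n + 1 : ℕ) : ℝ) + 1) = al := by rw [hal, hMc]
  have e1 : π * ((i + 1 : ℕ) : ℝ) / (((n + 1 : ℕ) : ℝ) + 1) = i * al + al := by
    rw [← e0]; push_cast; ring
  have e2 : π * (((i + 1 : ℕ) : ℝ) - 1) / (((n + 1 : ℕ) : ℝ) + 1) = i * al := by
    rw [← e0]; push_cast; ring
  have e3 : ((i + 1 : ℕ) : ℝ) * al = i * al + al := by push_cast; ring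
  rw [e3] at f2
  rw [e0, e1, e2, hab, eq_div_iff (by positivity)]
  rw [hB0] at f1 f2
  rw [hMc] at f1 f2
  rw [cos_add, sin_add] at f2
  rw [sin_add]
  have hs := sin_sq_add_cos_sq al
  push_cast at f1 f2 ⊢
  linear_combination f1 + f2 - V * sin (i * al) * ((n : ℝ) + 2 - i - 1) * hs +
    (((n : ℝ) + 2 - i) * (sin (i * al) * cos al + cos (i * al) * sin al) -
      ((n : ℝ) + 2 - i - 1) * sin (i * al)) * hV1
end

section
/- Let N ≥ 1 and let F⁰(z) = ∑_{j=1}^{N} a⁰_j z^{2j−1} with a⁰_j = ((N−j+2)·sin(πj/(N+1)) − (N−j+1)·sin(π(j−1)/(N+1)))/((N+1)·sin(π/(N+1))). Then for every complex z with z⁴ − 2z²·cos(π/(N+1)) + 1 ≠ 0, F⁰(z) = −z(z²−1)/(z⁴ − 2z²·cos(π/(N+1)) + 1) + 4·sin²(π/(2N+2))·z³(z²+1)(z^{2N+2}+1) / ((N+1)·(z⁴ − 2z²·cos(π/(N+1)) + 1)²). -/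
open Real Finset

lemma aux_S (s : ℕ → ℂ) (c w : ℂ) (h0 : s 0 = 0) (hs : ∀ n, s (n + 2) = 2 * c * s (n + 1) - s n)
    (n : ℕ) : (w ^ 2 - 2 * c * w + 1) * ∑ j ∈ range n, s (j + 1) * w ^ j =
      s 1 - w ^ n * s (n + 1) + w ^ (n + 1) * s n := by
  induction n with
  | zero => simp [h0]
  | succ n ih =>
    rw [sum_range_succ, mul_add, ih, hs n]
    ring

lemma aux_T (s : ℕ → ℂ) (c w M : ℂ) (h0 : s 0 = 0)
    (hs : ∀ n, s (n + 2) = 2 * c * s (n + 1) - s n) (n : ℕ) :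
    (w ^ 2 - 2 * c * w + 1) * ∑ j ∈ range n, (M - j - 1) * s (j + 1) * w ^ j =
      M * s 1 + (w ^ 2 - 1) * ∑ j ∈ range n, s (j + 1) * w ^ j
        + w ^ (n + 1) * (M - n - 1) * s n - w ^ n * (M - n) * s (n + 1) := by
  induction n with
  | zero => simp [h0]
  | succ n ih =>
    rw [sum_range_succ, mul_add, ih, sum_range_succ, hs n]
    push_cast
    ring

lemma aux_P (s : ℕ → ℂ) (w M : ℂ) (h0 : s 0 = 0) (n : ℕ) :
    ∑ j ∈ range n, ((M - j) * s (j + 1) - (M - j - 1) * s j) * w ^ j =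
      (1 - w) * ∑ j ∈ range n, (M - j - 1) * s (j + 1) * w ^ j
      + (1 + w) * ∑ j ∈ range n, s (j + 1) * w ^ j + (M - n - 1) * s n * w ^ n := by
  induction n with
  | zero => simp [h0]
  | succ n ih =>
    rw [sum_range_succ, ih, sum_range_succ, sum_range_succ]
    push_cast
    ring

theorem extremal_poly_closed_form_split (N : ℕ) (hN : 1 ≤ N) (a0 : ℕ → ℝ)
    (ha0 : ∀ j, a0 j =
      (((N : ℝ) - j + 2) * Real.sin (π * j / (N + 1)) -
        ((N : ℝ) - j + 1) * Real.sin (π * (j - 1) / (N + 1))) /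
      ((N + 1) * Real.sin (π / (N + 1))))
    (z : ℂ)
    (hz : z ^ 4 - 2 * z ^ 2 * (Real.cos (π / (N + 1)) : ℂ) + 1 ≠ 0) :
    ∑ j ∈ Finset.Icc 1 N, (a0 j : ℂ) * z ^ (2 * j - 1) =
      -(z * (z ^ 2 - 1)) / (z ^ 4 - 2 * z ^ 2 * (Real.cos (π / (N + 1)) : ℂ) + 1) +
      4 * (Real.sin (π / (2 * N + 2)) : ℂ) ^ 2 *
        (z ^ 3 * (z ^ 2 + 1) * (z ^ (2 * N + 2) + 1)) /
        ((N + 1) * (z ^ 4 - 2 * z ^ 2 * (Real.cos (π / (N + 1)) : ℂ) + 1) ^ 2) := by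
  have hNpos : (0 : ℝ) < N := by exact_mod_cast hN
  have hM : (0 : ℝ) < N + 1 := by linarith
  have hMC : (N : ℂ) + 1 ≠ 0 := by exact_mod_cast hM.ne'
  obtain ⟨t, ht⟩ : ∃ t : ℝ, t = π / (N + 1) := ⟨_, rfl⟩
  have htM : t * (N + 1) = π := by rw [ht]; field_simp
  have hspos : 0 < Real.sin t := by
    apply Real.sin_pos_of_pos_of_lt_pi
    · rw [ht]; positivity
    · rw [ht, div_lt_iff₀ hM]; nlinarith [Real.pi_pos]
  have hhalf : 4 * Real.sin (π / (2 * N + 2)) ^ 2 = 2 - 2 * Real.cos t := by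
    have e : t = 2 * (π / (2 * N + 2)) := by rw [ht]; field_simp
    rw [e, Real.cos_two_mul, Real.cos_sq']; ring
  have hhalfC : 4 * (Real.sin (π / (2 * N + 2)) : ℂ) ^ 2 = 2 - 2 * (Real.cos t : ℂ) := by
    exact_mod_cast congrArg (fun x : ℝ => (x : ℂ)) hhalf
  rw [← ht] at hz ⊢
  rw [hhalfC]
  set s : ℕ → ℂ := fun n => ((Real.sin (n * t) : ℝ) : ℂ) with hsdef
  set c : ℂ := ((Real.cos t : ℝ) : ℂ) with hc
  have h0 : s 0 = 0 := by simp [hsdef]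
  have hs : ∀ n, s (n + 2) = 2 * c * s (n + 1) - s n := by
    intro n
    have : Real.sin ((n + 2 : ℕ) * t) =
        2 * Real.cos t * Real.sin ((n + 1 : ℕ) * t) - Real.sin (n * t) := by
      have e1 : ((n + 2 : ℕ) : ℝ) * t = (n + 1 : ℕ) * t + t := by push_cast; ring
      have e2 : (n : ℝ) * t = (n + 1 : ℕ) * t - t := by push_cast; ring
      rw [e1, e2, Real.sin_add, Real.sin_sub]; ring
    simp only [hsdef, hc]
    rw [this]; push_cast; ring
  have hs1 : s 1 ≠ 0 := by
    simp only [hsdef, Nat.cast_one, one_mul]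
    exact_mod_cast hspos.ne'
  have hsN1 : s (N + 1) = 0 := by
    have : ((N + 1 : ℕ) : ℝ) * t = π := by push_cast; linarith
    simp only [hsdef]; rw [this]; simp
  have hsN : s N = s 1 := by
    have : (N : ℝ) * t = π - (1 : ℕ) * t := by push_cast; linarith
    simp only [hsdef]; rw [this, Real.sin_pi_sub]
  have hsum : ∑ j ∈ Finset.Icc 1 N, (a0 j : ℂ) * z ^ (2 * j - 1) =
      z / ((N + 1) * s 1) * ∑ j ∈ range N,
        (((N + 1 : ℂ) - j) * s (j + 1) - ((N + 1 : ℂ) - j - 1) * s j) * (z ^ 2) ^ j := by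
    rw [← Finset.Ico_add_one_right_eq_Icc, Finset.sum_Ico_eq_sum_range, Finset.mul_sum]
    apply Finset.sum_congr (by simp)
    intro j _
    have e1 : π * ((1 + j : ℕ) : ℝ) / (N + 1) = ((j + 1 : ℕ) : ℝ) * t := by
      rw [ht]; push_cast; ring
    have e2 : π * (((1 + j : ℕ) : ℝ) - 1) / (N + 1) = (j : ℝ) * t := by
      rw [ht]; push_cast; ring
    have e3 : 2 * (1 + j) - 1 = 2 * j + 1 := by omega
    have e4 : s 1 = ((Real.sin t : ℝ) : ℂ) := by simp [hsdef]
    rw [ha0, e1, e2, e3, ← ht, e4]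
    simp only [hsdef]
    rw [Complex.ofReal_div, Complex.ofReal_sub, Complex.ofReal_mul, Complex.ofReal_mul,
      Complex.ofReal_mul, pow_succ, pow_mul]
    push_cast
    ring
  have hS := aux_S s c (z ^ 2) h0 hs N
  have hT := aux_T s c (z ^ 2) (N + 1) h0 hs N
  rw [hsum, aux_P s (z ^ 2) (N + 1) h0 N]
  generalize ∑ j ∈ range N, ((N + 1 : ℂ) - j - 1) * s (j + 1) * (z ^ 2) ^ j = T at *
  generalize ∑ j ∈ range N, s (j + 1) * (z ^ 2) ^ j = S at *
  rw [hsN1, hsN] at hS hT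
  rw [hsN]
  have eD : (z ^ 2) ^ 2 - 2 * c * z ^ 2 + 1 = z ^ 4 - 2 * z ^ 2 * c + 1 := by ring
  have eP : z ^ (2 * N + 2) = (z ^ 2) ^ (N + 1) := by rw [← pow_mul]; congr 1
  rw [eD] at hS hT
  rw [eP]
  generalize hW : (z ^ 2) ^ (N + 1) = W at *
  generalize hD : z ^ 4 - 2 * z ^ 2 * c + 1 = D at *
  have hS' : S = s 1 * (1 + W) / D := by
    rw [eq_div_iff hz]; linear_combination hS
  have hT' : T = ((N + 1) * s 1 + (z ^ 4 - 1) * S) / D := by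
    rw [eq_div_iff hz]; linear_combination hT
  rw [hT', hS']
  field_simp
  rw [← hD]
  ring
end

section
/- Let N ≥ 1 and let F⁰(z) = ∑_{j=1}^{N} a⁰_j z^{2j−1} with a⁰_j = ((N−j+2)·sin(πj/(N+1)) − (N−j+1)·sin(π(j−1)/(N+1)))/((N+1)·sin(π/(N+1))). Then for every real t with cos(2t) ≠ cos(π/(N+1)), Re F⁰(e^{it}) = (4·sin²(π/(2N+2))/(N+1)) · cos(t)·cos²((N+1)t) / (cos(2t) − cos(π/(N+1)))². -/
open Real Finset

/-- Casoratian telescoping for two second-order recurrences. -/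
lemma cas_sum (f g : ℕ → ℝ) (c d : ℝ) (hf : ∀ j, f (j + 2) + f j = 2 * c * f (j + 1))
    (hg : ∀ j, g (j + 2) + g j = 2 * d * g (j + 1)) (n : ℕ) :
    2 * (d - c) * ∑ j ∈ range n, f (j + 1) * g (j + 1) =
      (f n * g (n + 1) - f (n + 1) * g n) - (f 0 * g 1 - f 1 * g 0) := by
  induction n with
  | zero => simp
  | succ n ih =>
    rw [sum_range_succ, mul_add, ih]
    linear_combination f (n + 1) * (-(hg n)) + g (n + 1) * hf n

lemma sin_rec (x y : ℝ) (j : ℕ) :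
    sin (((j + 2 : ℕ) : ℝ) * x + y) + sin ((j : ℝ) * x + y) =
      2 * cos x * sin (((j + 1 : ℕ) : ℝ) * x + y) := by
  have h1 : ((j + 2 : ℕ) : ℝ) * x + y = (((j + 1 : ℕ) : ℝ) * x + y) + x := by push_cast; ring
  have h2 : (j : ℝ) * x + y = (((j + 1 : ℕ) : ℝ) * x + y) - x := by push_cast; ring
  rw [h1, h2, sin_add, sin_sub]; ring

lemma cos_rec (x y : ℝ) (j : ℕ) :
    cos (((j + 2 : ℕ) : ℝ) * x + y) + cos ((j : ℝ) * x + y) =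
      2 * cos x * cos (((j + 1 : ℕ) : ℝ) * x + y) := by
  have h1 : ((j + 2 : ℕ) : ℝ) * x + y = (((j + 1 : ℕ) : ℝ) * x + y) + x := by push_cast; ring
  have h2 : (j : ℝ) * x + y = (((j + 1 : ℕ) : ℝ) * x + y) - x := by push_cast; ring
  rw [h1, h2, cos_add, cos_sub]; ring

/-- Weighted sum as a double sum. -/
lemma weight_sum (x : ℕ → ℝ) (n : ℕ) :
    ∑ j ∈ range n, ((n : ℝ) - j) * x j = ∑ m ∈ range n, ∑ j ∈ range (m + 1), x j := by
  induction n with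
  | zero => simp
  | succ n ih =>
    rw [sum_range_succ (fun m => ∑ j ∈ range (m + 1), x j), ← ih, sum_range_succ,
      sum_range_succ x, ← add_assoc, ← sum_add_distrib]
    push_cast
    congr 1
    · exact sum_congr rfl fun j _ => by ring
    · ring

lemma abel_sum (d : ℕ → ℝ) (hd : d 0 = 0) (t : ℝ) (n : ℕ) :
    ∑ j ∈ range n, (d (j + 1) - d j) * cos ((2 * j + 1) * t) =
      d n * cos ((2 * n + 1) * t) +
        2 * sin t * ∑ j ∈ range n, d (j + 1) * sin (((j + 1 : ℕ) : ℝ) * (2 * t) + 0) := by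
  induction n with
  | zero => simp [hd]
  | succ n ih =>
    rw [sum_range_succ, ih, sum_range_succ]
    have h1 : (2 * ((n + 1 : ℕ) : ℝ) + 1) * t = (((n + 1 : ℕ) : ℝ) * (2 * t) + 0) + t := by
      ring
    have h2 : (2 * (n : ℝ) + 1) * t = (((n + 1 : ℕ) : ℝ) * (2 * t) + 0) - t := by
      push_cast; ring
    rw [h1, h2, cos_add, cos_sub]; ring

lemma main_sum (N : ℕ) (θ t : ℝ) (hθ : ((N : ℝ) + 1) * θ = π) :
    (cos (2 * t) - cos θ) ^ 2 * ∑ j ∈ range N,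
      (((N : ℝ) - j + 1) * sin (((j : ℝ) + 1) * θ) - ((N : ℝ) - j) * sin ((j : ℝ) * θ)) *
        cos ((2 * j + 1) * t) =
      2 * (1 - cos θ) * sin θ * (cos t * cos (((N : ℝ) + 1) * t) ^ 2) := by
  set D := cos (2 * t) - cos θ with hD
  have hP := fun n => cas_sum (fun j => sin ((j : ℝ) * θ + 0))
    (fun j => sin ((j : ℝ) * (2 * t) + 0)) _ _ (sin_rec θ 0) (sin_rec (2 * t) 0) n
  have hQ := cas_sum (fun j => sin ((j : ℝ) * θ + 0))
    (fun j => cos ((j : ℝ) * (2 * t) + 0)) _ _ (sin_rec θ 0) (cos_rec (2 * t) 0) N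
  have hR := cas_sum (fun j => cos ((j : ℝ) * θ + 0))
    (fun j => sin ((j : ℝ) * (2 * t) + 0)) _ _ (cos_rec θ 0) (sin_rec (2 * t) 0) N
  have hH := cas_sum (fun j => sin ((j : ℝ) * θ + 0) + sin ((j : ℝ) * θ + (-θ)))
    (fun j => cos ((j : ℝ) * (2 * t) + (-t))) _ _
    (fun j => by linear_combination sin_rec θ 0 j + sin_rec θ (-θ) j)
    (cos_rec (2 * t) (-t)) N
  have hA := abel_sum (fun j => ((N : ℝ) + 1 - j) * sin ((j : ℝ) * θ + 0)) (by simp) t N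
  beta_reduce at hP hQ hR hH hA
  -- weighted sum
  have hw : 2 * D * ∑ j ∈ range N, (((N : ℝ) + 1 - (j + 1 : ℕ)) * sin (((j + 1 : ℕ) : ℝ) * θ + 0))
        * sin (((j + 1 : ℕ) : ℝ) * (2 * t) + 0) =
      D * (∑ j ∈ range N, sin (((j + 1 : ℕ) : ℝ) * θ + 0) * sin (((j + 1 : ℕ) : ℝ) * (2 * t) + 0))
      + sin (2 * t) *
        (∑ j ∈ range N, sin (((j + 1 : ℕ) : ℝ) * θ + 0) * cos (((j + 1 : ℕ) : ℝ) * (2 * t) + 0))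
      - sin θ *
        (∑ j ∈ range N, cos (((j + 1 : ℕ) : ℝ) * θ + 0) * sin (((j + 1 : ℕ) : ℝ) * (2 * t) + 0))
      := by
    have := weight_sum (fun j => sin (((j + 1 : ℕ) : ℝ) * θ + 0) *
      sin (((j + 1 : ℕ) : ℝ) * (2 * t) + 0)) N
    rw [show ∑ j ∈ range N, (((N : ℝ) + 1 - (j + 1 : ℕ)) * sin (((j + 1 : ℕ) : ℝ) * θ + 0))
        * sin (((j + 1 : ℕ) : ℝ) * (2 * t) + 0) = _ from
        (sum_congr rfl fun j _ => by push_cast; ring).trans this]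
    rw [mul_sum, mul_sum, mul_sum, mul_sum, ← sum_add_distrib, ← sum_sub_distrib]
    refine sum_congr rfl fun m _ => ?_
    rw [hP (m + 1)]
    have h1 : ((m + 1 + 1 : ℕ) : ℝ) * θ + 0 = (((m + 1 : ℕ) : ℝ) * θ + 0) + θ := by
      push_cast; ring
    have h2 : ((m + 1 + 1 : ℕ) : ℝ) * (2 * t) + 0 = (((m + 1 : ℕ) : ℝ) * (2 * t) + 0) + 2 * t := by
      push_cast; ring
    rw [h1, h2, sin_add _ θ, sin_add _ (2 * t), hD]
    simp only [Nat.cast_zero, zero_mul, add_zero, sin_zero]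
    ring
  have hsplit : ∑ j ∈ range N,
      (((N : ℝ) - j + 1) * sin (((j : ℝ) + 1) * θ) - ((N : ℝ) - j) * sin ((j : ℝ) * θ)) *
        cos ((2 * j + 1) * t) =
      (∑ j ∈ range N, (((N : ℝ) + 1 - (j + 1 : ℕ)) * sin (((j + 1 : ℕ) : ℝ) * θ + 0) -
        ((N : ℝ) + 1 - j) * sin ((j : ℝ) * θ + 0)) * cos ((2 * j + 1) * t)) +
      ∑ j ∈ range N, (sin (((j + 1 : ℕ) : ℝ) * θ + 0) + sin (((j + 1 : ℕ) : ℝ) * θ + (-θ))) *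
        cos (((j + 1 : ℕ) : ℝ) * (2 * t) + (-t)) := by
    rw [← sum_add_distrib]
    refine sum_congr rfl fun j _ => ?_
    have h1 : ((j + 1 : ℕ) : ℝ) * θ + 0 = ((j : ℝ) + 1) * θ := by push_cast; ring
    have h2 : ((j + 1 : ℕ) : ℝ) * θ + (-θ) = (j : ℝ) * θ := by push_cast; ring
    have h3 : ((j + 1 : ℕ) : ℝ) * (2 * t) + (-t) = (2 * j + 1) * t := by push_cast; ring
    rw [h1, h2, h3, add_zero]; push_cast; ring
  rw [hsplit, hA]
  have hP' := hP N
  rw [← hD] at hP' hQ hR hH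
  generalize (∑ j ∈ range N, (((N : ℝ) + 1 - (j + 1 : ℕ)) * sin (((j + 1 : ℕ) : ℝ) * θ + 0))
        * sin (((j + 1 : ℕ) : ℝ) * (2 * t) + 0)) = Sw at *
  generalize (∑ j ∈ range N, sin (((j + 1 : ℕ) : ℝ) * θ + 0) *
    sin (((j + 1 : ℕ) : ℝ) * (2 * t) + 0)) = P at *
  generalize (∑ j ∈ range N, sin (((j + 1 : ℕ) : ℝ) * θ + 0) *
    cos (((j + 1 : ℕ) : ℝ) * (2 * t) + 0)) = Q at *
  generalize (∑ j ∈ range N, cos (((j + 1 : ℕ) : ℝ) * θ + 0) *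
    sin (((j + 1 : ℕ) : ℝ) * (2 * t) + 0)) = R at *
  generalize (∑ j ∈ range N, (sin (((j + 1 : ℕ) : ℝ) * θ + 0) +
    sin (((j + 1 : ℕ) : ℝ) * θ + (-θ))) * cos (((j + 1 : ℕ) : ℝ) * (2 * t) + (-t))) = H at *
  clear hP hA hsplit
  -- evaluate at the endpoint
  set α := ((N : ℝ) + 1) * t with hα
  have e1 : ((N + 1 : ℕ) : ℝ) * θ + 0 = π := by push_cast; linarith
  have e2 : (N : ℝ) * θ + 0 = π - θ := by linarith
  have e3 : ((N + 1 : ℕ) : ℝ) * θ + (-θ) = π - θ := by push_cast; linarith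
  have e4 : (N : ℝ) * θ + (-θ) = π - (θ + θ) := by linarith
  have e5 : ((N + 1 : ℕ) : ℝ) * (2 * t) + 0 = 2 * α := by push_cast; ring
  have e6 : (N : ℝ) * (2 * t) + 0 = 2 * α - 2 * t := by rw [hα]; ring
  have e7 : ((N + 1 : ℕ) : ℝ) * (2 * t) + (-t) = 2 * α - t := by push_cast; ring
  have e8 : (N : ℝ) * (2 * t) + (-t) = 2 * α - 2 * t - t := by rw [hα]; ring
  have e9 : (2 * (N : ℝ) + 1) * t = 2 * α - t := by rw [hα]; ring
  simp only [e1, e2, e3, e4, e5, e6, e7, e8, Nat.cast_zero, Nat.cast_one, zero_mul, zero_add,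
    one_mul, sin_zero, cos_zero, sin_pi, cos_pi, sin_pi_sub, cos_pi_sub, add_zero, sin_neg,
    cos_neg, add_neg_cancel] at hP' hQ hR hH
  simp only [e2, e9, sin_pi_sub]
  have e10 : 2 * t + -t = t := by ring
  rw [e10] at hH
  have hc : cos α ^ 2 = (1 + cos (2 * α)) / 2 := by rw [cos_two_mul]; ring
  rw [hc]
  simp only [sin_add θ θ, sin_sub, cos_sub] at hP' hQ hR hH ⊢
  have hs := sin_sq_add_cos_sq t
  clear_value D α
  simp only [sin_two_mul t, cos_two_mul t] at hR hH hw hD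
  have h1 : D ^ 2 * (2 * sin t * Sw) = sin t / 2 * (D * (2 * D * P) + 2 * sin t * cos t * (2 * D * Q) - sin θ * (2 * D * R)) * (1) := by
    linear_combination D * sin t * hw
  have h2 : D ^ 2 * H = D / 2 * (2 * D * H) := by ring
  rw [hP', hQ, hR] at h1
  rw [hH] at h2
  rw [mul_add, mul_add, h1, h2, hD]
  generalize sin t = st at *
  generalize cos t = ct at *
  generalize sin θ = s at *
  generalize cos θ = c at *
  generalize sin (2*α) = sb at *
  generalize cos (2*α) = cb at *
  clear hP' hQ hR hH hw h1 h2 hc hD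
  have : ct^2 = 1 - st^2 := by linarith
  have h3 : ct^3 = ct*(1 - st^2) := by rw [← this]; ring
  have h4 : ct^4 = (1 - st^2)^2 := by rw [← this]; ring
  have h5 : ct^5 = ct*(1 - st^2)^2 := by rw [← this]; ring
  ring_nf
  simp only [this, h3, h4, h5]
  ring

theorem extremal_poly_re_formula (N : ℕ) (hN : 1 ≤ N) (a0 : ℕ → ℝ)
    (ha0 : ∀ j, a0 j =
      (((N : ℝ) - j + 2) * Real.sin (π * j / (N + 1)) -
        ((N : ℝ) - j + 1) * Real.sin (π * (j - 1) / (N + 1))) /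
      ((N + 1) * Real.sin (π / (N + 1))))
    (t : ℝ) (ht : Real.cos (2 * t) ≠ Real.cos (π / (N + 1))) :
    (∑ j ∈ Finset.Icc 1 N,
        (a0 j : ℂ) * Complex.exp (t * Complex.I) ^ (2 * j - 1)).re =
      4 * Real.sin (π / (2 * N + 2)) ^ 2 / (N + 1) *
        (Real.cos t * Real.cos ((N + 1) * t) ^ 2 /
          (Real.cos (2 * t) - Real.cos (π / (N + 1))) ^ 2) := by
  have hN0 : (0 : ℝ) < (N : ℝ) + 1 := by positivity
  have hN1 : (1 : ℝ) ≤ N := by exact_mod_cast hN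
  have hm := main_sum N (π / (N + 1)) t (by field_simp)
  have hs : 0 < sin (π / ((N : ℝ) + 1)) := by
    apply sin_pos_of_pos_of_lt_pi (by positivity)
    rw [div_lt_iff₀ hN0]
    nlinarith [pi_pos]
  have hD : cos (2 * t) - cos (π / ((N : ℝ) + 1)) ≠ 0 := sub_ne_zero.mpr ht
  have hhalf : 4 * sin (π / (2 * (N : ℝ) + 2)) ^ 2 = 2 * (1 - cos (π / ((N : ℝ) + 1))) := by
    have : π / ((N : ℝ) + 1) = 2 * (π / (2 * (N : ℝ) + 2)) := by field_simp
    rw [this, cos_two_mul, sin_sq]; ring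
  have hre : (∑ j ∈ Finset.Icc 1 N,
        (a0 j : ℂ) * Complex.exp (t * Complex.I) ^ (2 * j - 1)).re =
      (∑ j ∈ range N,
      (((N : ℝ) - j + 1) * sin (((j : ℝ) + 1) * (π / (N + 1))) -
        ((N : ℝ) - j) * sin ((j : ℝ) * (π / (N + 1)))) *
        cos ((2 * j + 1) * t)) / ((N + 1) * Real.sin (π / (N + 1))) := by
    rw [Complex.re_sum, sum_div, ← Finset.Ico_add_one_right_eq_Icc, Finset.sum_Ico_eq_sum_range]
    refine sum_congr (by simp) fun j _ => ?_
    have h1 : 2 * (1 + j) - 1 = 2 * j + 1 := by omega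
    have h2 : Complex.exp (t * Complex.I) ^ (2 * j + 1) =
        Complex.exp ((((2 * j + 1) * t : ℝ) : ℂ) * Complex.I) := by
      rw [← Complex.exp_nat_mul]; congr 1; push_cast; ring
    rw [h1, h2, Complex.re_ofReal_mul, Complex.exp_ofReal_mul_I_re, ha0]
    have h3 : π * ((1 + j : ℕ) : ℝ) / ((N : ℝ) + 1) = ((j : ℝ) + 1) * (π / (N + 1)) := by
      push_cast; ring
    have h4 : π * (((1 + j : ℕ) : ℝ) - 1) / ((N : ℝ) + 1) = (j : ℝ) * (π / (N + 1)) := by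
      push_cast; ring
    rw [h3, h4]; push_cast; ring
  rw [hre, hhalf]
  generalize (∑ j ∈ range N,
      (((N : ℝ) - j + 1) * sin (((j : ℝ) + 1) * (π / (N + 1))) -
        ((N : ℝ) - j) * sin ((j : ℝ) * (π / (N + 1)))) *
        cos ((2 * j + 1) * t)) = S at *
  generalize cos (2 * t) - cos (π / ((N : ℝ) + 1)) = D at *
  have hs' := hs.ne'
  generalize sin (π / ((N : ℝ) + 1)) = s at *
  rw [div_mul_div_comm, div_eq_div_iff (by positivity) (by positivity)]
  linear_combination ((N : ℝ) + 1) * hm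
end

section
/- Let N ≥ 1 and let F⁰(z) = ∑_{j=1}^{N} a⁰_j z^{2j−1} with a⁰_j = ((N−j+2)·sin(πj/(N+1)) − (N−j+1)·sin(π(j−1)/(N+1)))/((N+1)·sin(π/(N+1))). Then for every real t with cos(2t) ≠ cos(π/(N+1)), Im F⁰(e^{it}) = (sin((2N+2)t)·cos(t)·(1 − cos(π/(N+1))) − (N+1)·sin(t)·(cos(2t) − cos(π/(N+1)))) / ((N+1)·(cos(2t) − cos(π/(N+1)))²). -/
open Real Finset

/-- Summation by parts for products of solutions of two second order recurrences. -/
theorem telescoped_sum (U S : ℕ → ℝ) (p q n : ℝ)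
    (hU : ∀ k, U (k + 2) = 2 * p * U (k + 1) - U k)
    (hS : ∀ k, S (k + 2) = 2 * q * S (k + 1) - S k)
    (G : ℕ → ℝ)
    (hG : ∀ i, G i = 2 * (q - p) * (U i * S (i + 1) - U (i + 1) * S i)
      + 2 * (q - p) * (n - i + 1) *
        ((U (i + 1) - U i) * S (i + 1) - (U (i + 2) - U (i + 1)) * S i)
      + (U (i + 1) - U i) * S (i + 2) - 2 * (U (i + 2) - U (i + 1)) * S (i + 1)
      + (U (i + 3) - U (i + 2)) * S i) (M : ℕ) :
    4 * (q - p) ^ 2 * ∑ i ∈ Finset.range M,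
      ((n - i + 1) * (U (i + 2) - U (i + 1)) + U (i + 1)) * S (i + 1) = G M - G 0 := by
  induction M with
  | zero => simp
  | succ i ih =>
    rw [Finset.sum_range_succ, mul_add, ih, hG (i + 1), hG i]
    have e1 := hU i
    have e2 := hU (i + 1)
    have e3 := hU (i + 2)
    have f1 := hS i
    have f2 := hS (i + 1)
    simp only [add_assoc, Nat.reduceAdd] at *
    rw [e3, e2, e1, f2, f1]
    push_cast
    ring

theorem extremal_poly_im_formula (N : ℕ) (hN : 1 ≤ N) (a0 : ℕ → ℝ)
    (ha0 : ∀ j, a0 j =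
      (((N : ℝ) - j + 2) * Real.sin (π * j / (N + 1)) -
        ((N : ℝ) - j + 1) * Real.sin (π * (j - 1) / (N + 1))) /
      ((N + 1) * Real.sin (π / (N + 1))))
    (t : ℝ) (ht : Real.cos (2 * t) ≠ Real.cos (π / (N + 1))) :
    (∑ j ∈ Finset.Icc 1 N,
        (a0 j : ℂ) * Complex.exp (t * Complex.I) ^ (2 * j - 1)).im =
      (Real.sin ((2 * N + 2) * t) * Real.cos t * (1 - Real.cos (π / (N + 1))) -
        (N + 1) * Real.sin t * (Real.cos (2 * t) - Real.cos (π / (N + 1)))) /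
      ((N + 1) * (Real.cos (2 * t) - Real.cos (π / (N + 1))) ^ 2) := by
  have hn : (0 : ℝ) < N + 1 := by positivity
  have hn2 : (2 : ℝ) ≤ N + 1 := by
    have : (1 : ℝ) ≤ N := by exact_mod_cast hN
    linarith
  obtain ⟨h, hh⟩ : ∃ h, h = π / ((N : ℝ) + 1) := ⟨_, rfl⟩
  have hpi : h * (N + 1) = π := by rw [hh]; field_simp
  have hs : 0 < Real.sin h := by
    apply Real.sin_pos_of_pos_of_lt_pi
    · rw [hh]; positivity
    · rw [hh, div_lt_iff₀ hn]; nlinarith [Real.pi_pos]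
  have him : (∑ j ∈ Finset.Icc 1 N,
        (a0 j : ℂ) * Complex.exp (t * Complex.I) ^ (2 * j - 1)).im =
      ∑ i ∈ Finset.range N, a0 (i + 1) * Real.sin ((2 * i + 1) * t) := by
    rw [Complex.im_sum, ← Finset.Ico_succ_right_eq_Icc, Finset.sum_Ico_eq_sum_range]
    refine Finset.sum_congr (by simp) fun i _ => ?_
    rw [Complex.im_ofReal_mul, ← Complex.exp_nat_mul, add_comm 1 i]
    have e : ((2 * (i + 1) - 1 : ℕ) : ℂ) * (t * Complex.I)
        = (((2 * i + 1) * t : ℝ) : ℂ) * Complex.I := by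
      rw [show 2 * (i + 1) - 1 = 2 * i + 1 by omega]
      push_cast
      ring
    rw [e, Complex.exp_ofReal_mul_I_im]
  rw [him]
  rw [← hh] at ht ⊢
  obtain ⟨U, hUd⟩ : ∃ U : ℕ → ℝ, ∀ k : ℕ, U k = Real.sin (h * ((k : ℝ) - 1)) := ⟨_, fun _ => rfl⟩
  obtain ⟨S, hSd⟩ : ∃ S : ℕ → ℝ, ∀ k : ℕ, S k = Real.sin ((2 * (k : ℝ) - 1) * t) :=
    ⟨_, fun _ => rfl⟩
  have hU : ∀ k, U (k + 2) = 2 * Real.cos h * U (k + 1) - U k := by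
    intro k
    simp only [hUd]
    push_cast
    rw [show h * ((k : ℝ) + 2 - 1) = h * k + h by ring, show h * ((k : ℝ) + 1 - 1) = h * k by ring,
      show h * ((k : ℝ) - 1) = h * k - h by ring, Real.sin_add, Real.sin_sub]
    ring
  have hS : ∀ k, S (k + 2) = 2 * Real.cos (2 * t) * S (k + 1) - S k := by
    intro k
    simp only [hSd]
    push_cast
    rw [show (2 * ((k : ℝ) + 2) - 1) * t = (2 * k + 1) * t + 2 * t by ring,
      show (2 * ((k : ℝ) + 1) - 1) * t = (2 * k + 1) * t by ring,
      show (2 * (k : ℝ) - 1) * t = (2 * k + 1) * t - 2 * t by ring, Real.sin_add, Real.sin_sub]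
    ring
  have key := telescoped_sum U S (Real.cos h) (Real.cos (2 * t)) N hU hS _ (fun _ => rfl) N
  have hsum : ∑ i ∈ Finset.range N, a0 (i + 1) * Real.sin ((2 * i + 1) * t) =
      (∑ i ∈ Finset.range N,
      (((N : ℝ) - i + 1) * (U (i + 2) - U (i + 1)) + U (i + 1)) * S (i + 1)) /
        ((N + 1) * Real.sin h) := by
    rw [Finset.sum_div]
    refine Finset.sum_congr rfl fun i _ => ?_
    rw [ha0, hUd, hUd, hSd, ← hh]
    push_cast
    rw [show π * ((i : ℝ) + 1) / (N + 1) = h * (i + 2 - 1) by rw [hh]; ring,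
      show π * ((i : ℝ) + 1 - 1) / (N + 1) = h * (i + 1 - 1) by rw [hh]; ring,
      show (2 * ((i : ℝ) + 1) - 1) * t = (2 * i + 1) * t by ring]
    ring
  rw [hsum]
  have u1 : U (N + 1) = Real.sin h := by
    rw [hUd]; push_cast
    rw [show h * ((N : ℝ) + 1 - 1) = π - h by linear_combination hpi, Real.sin_pi_sub]
  have u2 : U (N + 2) = 0 := by
    rw [hUd]; push_cast
    rw [show h * ((N : ℝ) + 2 - 1) = π by linear_combination hpi, Real.sin_pi]
  have u0 : U N = 2 * Real.cos h * Real.sin h := by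
    have := hU N
    rw [u1, u2] at this; linarith
  have u3 : U (N + 3) = - Real.sin h := by
    have := hU (N + 1)
    simp only [add_assoc, Nat.reduceAdd] at this
    rw [u1, u2] at this; linarith
  have v0 : U 0 = - Real.sin h := by rw [hUd]; simp
  have v1 : U 1 = 0 := by rw [hUd]; simp
  have v2 : U 2 = Real.sin h := by have := hU 0; simp only [zero_add] at this; rw [this, v0, v1]; ring
  have v3 : U 3 = 2 * Real.cos h * Real.sin h := by
    have := hU 1; simp only [Nat.reduceAdd] at this; rw [this, v2, v1]; ring
  have r0 : S 0 = - Real.sin t := by rw [hSd]; simp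
  have r1 : S 1 = Real.sin t := by rw [hSd]; norm_num
  have r2 := hS 0
  have s1 : S (N + 1) = Real.sin ((2 * N + 2) * t) * Real.cos t
      - Real.cos ((2 * N + 2) * t) * Real.sin t := by
    rw [hSd, ← Real.sin_sub]; push_cast; ring_nf
  have s2 : S (N + 2) = Real.sin ((2 * N + 2) * t) * Real.cos t
      + Real.cos ((2 * N + 2) * t) * Real.sin t := by
    rw [hSd, ← Real.sin_add]; push_cast; ring_nf
  have s0 : S N = 2 * Real.cos (2 * t) * S (N + 1) - S (N + 2) := by
    have := hS N; linarith
  simp only [zero_add, u0, u1, u2, u3, v0, v1, v2, v3, s0, r0, r1, r2, s1, s2] at key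
  have hD : Real.cos (2 * t) - Real.cos h ≠ 0 := sub_ne_zero.mpr ht
  rw [div_eq_div_iff (by positivity) (by positivity)]
  apply mul_left_cancel₀ (four_ne_zero (α := ℝ))
  push_cast at key
  linear_combination ((N : ℝ) + 1) * key
end

section
/- Let N ≥ 2 and let u(t) = ∑_{j=1}^{N} a⁰_j·cos((2j−1)t) with a⁰_j = ((N−j+2)·sin(πj/(N+1)) − (N−j+1)·sin(π(j−1)/(N+1)))/((N+1)·sin(π/(N+1))). Then u is positive and strictly decreasing on the interval (0, 3π/(2N+2)): for all 0 < t₁ < t₂ < 3π/(2N+2), u(t₁) > u(t₂) > 0. -/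
open Real Finset

lemma sumC (θ x : ℝ) (m : ℕ) :
    2 * (cos x - cos θ) * ∑ k ∈ range (m+1), sin (k * θ) * cos (k * x) =
      sin θ + cos ((m+1) * x) * sin (m * θ) - cos (m * x) * sin ((m+1) * θ) := by
  induction m with
  | zero => simp
  | succ m ih =>
    rw [sum_range_succ, mul_add, ih]
    push_cast
    have e1 : ((m:ℝ) + 1 + 1) * x = (m+1) * x + x := by ring
    have e2 : ((m:ℝ) + 1 + 1) * θ = (m+1) * θ + θ := by ring
    have e3 : (m:ℝ) * x = (m+1) * x - x := by ring
    have e4 : (m:ℝ) * θ = (m+1) * θ - θ := by ring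
    rw [e1, e2, e3, e4]
    simp only [cos_add, sin_add, cos_sub, sin_sub]
    ring

lemma sumA (θ x : ℝ) (m : ℕ) :
    2 * (cos x - cos θ) * ∑ k ∈ range (m+1), sin (k * θ) * sin (k * x) =
      sin ((m+1) * x) * sin (m * θ) - sin (m * x) * sin ((m+1) * θ) := by
  induction m with
  | zero => simp
  | succ m ih =>
    rw [sum_range_succ, mul_add, ih]
    push_cast
    have e1 : ((m:ℝ) + 1 + 1) * x = (m+1) * x + x := by ring
    have e2 : ((m:ℝ) + 1 + 1) * θ = (m+1) * θ + θ := by ring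
    have e3 : (m:ℝ) * x = (m+1) * x - x := by ring
    have e4 : (m:ℝ) * θ = (m+1) * θ - θ := by ring
    rw [e1, e2, e3, e4]
    simp only [cos_add, sin_add, cos_sub, sin_sub]
    ring

lemma sumB (θ x : ℝ) (m : ℕ) :
    (2 * (cos x - cos θ))^2 * ∑ k ∈ range (m+1), ((m:ℝ) + 1 - k) * (sin (k * θ) * sin (k * x)) =
      - (2 * (cos x - cos θ)) * sin (m * x) * sin ((m+1) * θ)
      + 2 * sin x * (sin θ + cos ((m+1) * x) * sin (m * θ) - cos (m * x) * sin ((m+1) * θ)) := by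
  induction m with
  | zero => simp
  | succ m ih =>
    have h : ∑ k ∈ range (m+1+1), (((m+1:ℕ):ℝ) + 1 - k) * (sin (k * θ) * sin (k * x))
      = ∑ k ∈ range (m+1), ((m:ℝ) + 1 - k) * (sin (k * θ) * sin (k * x))
       + ∑ k ∈ range (m+1+1), sin (k * θ) * sin (k * x) := by
      rw [sum_range_succ, sum_range_succ _ (m+1), ← add_assoc, ← sum_add_distrib]
      congr 1
      · apply sum_congr rfl; intros; push_cast; ring
      · push_cast; ring
    have hA := sumA θ x (m+1)
    rw [h, mul_add, ih, pow_two, mul_assoc _ _ (∑ k ∈ range (m+1+1), _), hA]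
    push_cast
    have e1 : ((m:ℝ) + 1 + 1) * x = (m+1) * x + x := by ring
    have e2 : ((m:ℝ) + 1 + 1) * θ = (m+1) * θ + θ := by ring
    have e3 : (m:ℝ) * x = (m+1) * x - x := by ring
    have e4 : (m:ℝ) * θ = (m+1) * θ - θ := by ring
    rw [e1, e2, e3, e4]
    simp only [cos_add, sin_add, cos_sub, sin_sub]
    generalize sin ((m+1)*x) = P
    generalize cos ((m+1)*x) = Q
    generalize sin ((m+1)*θ) = R
    generalize cos ((m+1)*θ) = S
    have h1 := sin_sq_add_cos_sq x
    have h2 := sin_sq_add_cos_sq θ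
    generalize sin x = a at *
    generalize cos x = b at *
    generalize sin θ = c at *
    generalize cos θ = d at *
    have h1' : a^2 = 1 - b^2 := by linarith
    grind

lemma rearr (n θ t : ℝ) (M : ℕ) :
    ∑ j ∈ Icc 1 M, ((n - j + 1) * sin (j * θ) - (n - j) * sin ((j - 1) * θ)) * cos ((2 * (j:ℝ) - 1) * t)
    = ∑ k ∈ range (M+1), sin (k * θ) * (2 * (n - k) * sin t * sin (k * (2 * t)) + 2 * cos t * cos (k * (2*t)))
      + (n - M - 1) * sin (M * θ) * cos ((2 * (M:ℝ) + 1) * t) := by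
  induction M with
  | zero => simp
  | succ m ih =>
    rw [sum_Icc_succ_top (by omega), ih, sum_range_succ _ (m+1)]
    push_cast
    have e1 : (2 * ((m:ℝ) + 1) - 1) * t = (m+1) * (2*t) - t := by ring
    have e2 : (2 * ((m:ℝ)) + 1) * t = (m+1) * (2*t) - t := by ring
    have e3 : (2 * ((m:ℝ) + 1) + 1) * t = (m+1) * (2*t) + t := by ring
    have e4 : ((m:ℝ) + 1 - 1) = m := by ring
    rw [e1, e2, e3, e4, cos_add, cos_sub]
    ring

lemma prodcos (n : ℕ) (t : ℝ) :
    cos (n * t) = 2 ^ (n-1) * ∏ k ∈ range n, (cos t - cos ((2 * (k:ℝ) + 1) * π / (2 * n))) := by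
  have hinj : Set.InjOn (fun (k : ℕ) => cos ((2 * k + 1) * π / (2 * n))) (range n : Set ℕ) :=
    (Finset.range n).nodup_map_iff_injOn.mp (Polynomial.Chebyshev.roots_T_real_nodup n)
  have hr := Polynomial.Chebyshev.roots_T_real n
  have h := Polynomial.C_leadingCoeff_mul_prod_multiset_X_sub_C
    (p := Polynomial.Chebyshev.T ℝ n) (by
      rw [hr, Finset.card_val, Finset.card_image_of_injOn hinj]; simp)
  have h2 := congrArg (Polynomial.eval (cos t)) h
  rw [Polynomial.Chebyshev.T_real_cos, hr] at h2
  rw [Int.cast_natCast] at h2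
  rw [← h2]
  change Polynomial.eval _ (_ * ∏ a ∈ _, _) = _
  rw [prod_image hinj]
  simp [Polynomial.eval_prod]

/-- The product with the two extreme roots removed. -/
noncomputable def G (N : ℕ) (y : ℝ) : ℝ :=
  ∏ k ∈ range (N - 1), (y - cos ((2 * ((k:ℝ) + 1) + 1) * π / (2 * (N + 1))))

lemma cosG (N : ℕ) (hN : 2 ≤ N) (t : ℝ) :
    cos ((N + 1) * t) = 2 ^ N / 4 * (2 * (cos (2 * t) - cos (π / (N + 1)))) * G N (cos t) := by
  obtain ⟨M, rfl⟩ : ∃ M, N = M + 1 := ⟨N - 1, by omega⟩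
  have h := prodcos (M + 1 + 1) t
  rw [prod_range_succ, prod_range_succ'] at h
  push_cast at h
  push_cast
  rw [h]
  have h0 : cos (2 * t) - cos (π / ((M:ℝ) + 1 + 1))
      = 2 * (cos t - cos ((2 * 0 + 1) * π / (2 * ((M:ℝ) + 1 + 1)))) *
        (cos t - cos ((2 * ((M:ℝ) + 1) + 1) * π / (2 * ((M:ℝ) + 1 + 1)))) := by
    have e1 : π / ((M:ℝ) + 1 + 1) = 2 * ((2 * 0 + 1) * π / (2 * ((M:ℝ) + 1 + 1))) := by
      field_simp
      try ring
    have e2 : (2 * ((M:ℝ) + 1) + 1) * π / (2 * ((M:ℝ) + 1 + 1))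
        = π - ((2 * 0 + 1) * π / (2 * ((M:ℝ) + 1 + 1))) := by
      field_simp
      ring
    rw [e1, e2, cos_pi_sub, cos_two_mul, cos_two_mul]
    ring
  rw [h0]
  simp only [G, Nat.add_sub_cancel]
  push_cast
  ring

lemma c_lt (N : ℕ) (t : ℝ) (h0 : 0 < t) (h1 : t < 3 * π / (2 * N + 2)) (k : ℕ)
    (hk : k ∈ range (N - 1)) :
    0 < cos t - cos ((2 * ((k:ℝ) + 1) + 1) * π / (2 * (N + 1))) := by
  have hk' : k + 2 ≤ N := by have := mem_range.1 hk; omega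
  have hk2 : (k:ℝ) + 2 ≤ N := by exact_mod_cast hk'
  have hp := pi_pos
  rw [sub_pos]
  apply cos_lt_cos_of_nonneg_of_le_pi h0.le
  · rw [div_le_iff₀ (by positivity)]
    nlinarith
  · refine h1.trans_le ?_
    rw [show 2 * ((N:ℝ) + 1) = 2 * N + 2 by ring]
    gcongr
    have : (0:ℝ) ≤ k := by positivity
    linarith

lemma G_pos (N : ℕ) (t : ℝ) (h0 : 0 < t) (h1 : t < 3 * π / (2 * N + 2)) : 0 < G N (cos t) :=
  prod_pos fun k hk => c_lt N t h0 h1 k hk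

lemma G_mono (N : ℕ) (t y : ℝ) (h0 : 0 < t) (h1 : t < 3 * π / (2 * N + 2)) (hy : cos t ≤ y) :
    G N (cos t) ≤ G N y :=
  prod_le_prod (fun k hk => (c_lt N t h0 h1 k hk).le) fun k hk => by linarith

lemma closed (N : ℕ) (t u : ℝ) (hN : 2 ≤ N)
    (hs : u * (((N:ℝ) + 1) * sin (π / (N + 1))) =
      ∑ j ∈ Icc 1 N, (((N:ℝ) + 1 - j + 1) * sin (j * (π / (N + 1)))
        - ((N:ℝ) + 1 - j) * sin ((j - 1) * (π / (N + 1)))) * cos ((2 * (j:ℝ) - 1) * t)) :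
    (2 * (cos (2 * t) - cos (π / (N + 1)))) ^ 2 * (((N:ℝ) + 1) * u) =
      8 * (1 - cos (π / (N + 1))) * cos t * cos ((N + 1) * t) ^ 2 := by
  have hn : ((N:ℝ) + 1) ≠ 0 := by positivity
  have hsθ : 0 < sin (π / (N + 1)) := by
    apply sin_pos_of_pos_of_lt_pi (by positivity)
    rw [div_lt_iff₀ (by positivity)]
    have : (2:ℝ) ≤ N := by exact_mod_cast hN
    nlinarith [pi_pos]
  have hB := sumB (π / (N + 1)) (2 * t) N
  have hC := sumC (π / (N + 1)) (2 * t) N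
  rw [rearr] at hs
  have e1 : ((N:ℝ) + 1) * (π / (N + 1)) = π := by field_simp
  have e2 : (N:ℝ) * (π / (N + 1)) = π - π / (N + 1) := by field_simp; ring
  have e3 : ((N:ℝ) + 1) * (2 * t) = 2 * ((N + 1) * t) := by ring
  rw [e1, e2, sin_pi_sub, sin_pi, e3, cos_two_mul ((N + 1) * t)] at hB hC
  have hsum : ∑ k ∈ range (N+1), sin (k * (π / (N + 1))) *
        (2 * ((N:ℝ) + 1 - k) * sin t * sin (k * (2 * t)) + 2 * cos t * cos (k * (2*t)))
      = 2 * sin t * (∑ k ∈ range (N+1), ((N:ℝ) + 1 - k) *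
          (sin (k * (π / (N + 1))) * sin (k * (2 * t))))
        + 2 * cos t * ∑ k ∈ range (N+1), sin (k * (π / (N + 1))) * cos (k * (2 * t)) := by
    rw [mul_sum, mul_sum, ← sum_add_distrib]
    apply sum_congr rfl
    intros
    ring
  rw [hsum] at hs
  generalize (∑ k ∈ range (N+1), ((N:ℝ) + 1 - k) *
          (sin (k * (π / (N + 1))) * sin (k * (2 * t)))) = B at *
  generalize ∑ k ∈ range (N+1), sin (k * (π / (N + 1))) * cos (k * (2 * t)) = C at *
  apply mul_right_cancel₀ hsθ.ne'
  generalize sin (π / (N + 1)) = sθ at *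
  generalize cos (π / (N + 1)) = d at *
  generalize cos ((N + 1) * t) = Q at *
  generalize sin ((N:ℝ) * (2 * t)) = w1 at *
  generalize cos ((N:ℝ) * (2 * t)) = w2 at *
  have hx : cos (2 * t) = 1 - 2 * sin t ^ 2 := by
    have := cos_two_mul t
    have := sin_sq_add_cos_sq t
    linarith
  rw [sin_two_mul] at hB
  rw [hx] at hB hC ⊢
  linear_combination (2 * (1 - 2 * sin t ^ 2 - d)) ^ 2 * hs + 2 * sin t * hB
    + 2 * cos t * (2 * (1 - 2 * sin t ^ 2 - d)) * hC

theorem extremal_re_pos_decreasing (N : ℕ) (hN : 2 ≤ N) (a0 : ℕ → ℝ)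
    (ha0 : ∀ j, a0 j =
      (((N : ℝ) - j + 2) * Real.sin (π * j / (N + 1)) -
        ((N : ℝ) - j + 1) * Real.sin (π * (j - 1) / (N + 1))) /
      ((N + 1) * Real.sin (π / (N + 1))))
    (u : ℝ → ℝ)
    (hu : ∀ t, u t = ∑ j ∈ Finset.Icc 1 N, a0 j * Real.cos ((2 * (j : ℝ) - 1) * t)) :
    ∀ t₁ t₂ : ℝ, 0 < t₁ → t₁ < t₂ → t₂ < 3 * π / (2 * N + 2) →
      u t₁ > u t₂ ∧ u t₂ > 0 := by
  have hp := pi_pos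
  have hN' : (2:ℝ) ≤ N := by exact_mod_cast hN
  have hθ0 : 0 < π / ((N:ℝ) + 1) := by positivity
  have hθ1 : π / ((N:ℝ) + 1) < π := by
    rw [div_lt_iff₀ (by positivity)]
    nlinarith
  have hsθ : 0 < sin (π / (N + 1)) := sin_pos_of_pos_of_lt_pi hθ0 hθ1
  have hcθ : cos (π / ((N:ℝ) + 1)) < 1 := by
    have := cos_lt_cos_of_nonneg_of_le_pi le_rfl hθ1.le hθ0
    simpa using this
  set K : ℝ := 8 * (1 - cos (π / (N + 1))) / (N + 1) * (2 ^ N / 4) ^ 2 with hK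
  have hKpos : 0 < K := by
    have : 0 < 1 - cos (π / ((N:ℝ) + 1)) := by linarith
    positivity
  have hcl : ∀ t, (2 * (cos (2 * t) - cos (π / (N + 1)))) ^ 2 * (((N:ℝ) + 1) * u t) =
      8 * (1 - cos (π / (N + 1))) * cos t * cos ((N + 1) * t) ^ 2 := by
    intro t
    apply closed N t (u t) hN
    rw [hu, sum_mul]
    apply sum_congr rfl
    intro j _
    rw [ha0 j]
    have e1 : π * (j:ℝ) / (N + 1) = j * (π / (N + 1)) := by ring
    have e2 : π * ((j:ℝ) - 1) / (N + 1) = (j - 1) * (π / (N + 1)) := by ring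
    rw [e1, e2, mul_right_comm, div_mul_cancel₀ _ (by positivity)]
    ring
  have hgen : ∀ t, cos (2 * t) ≠ cos (π / (N + 1)) → u t = K * cos t * G N (cos t) ^ 2 := by
    intro t ht
    have hD : (2 * (cos (2 * t) - cos (π / ((N:ℝ) + 1)))) ^ 2 ≠ 0 :=
      pow_ne_zero _ (mul_ne_zero two_ne_zero (sub_ne_zero.2 ht))
    have h := hcl t
    rw [cosG N hN t] at h
    have hn : ((N:ℝ) + 1) ≠ 0 := by positivity
    apply mul_left_cancel₀ hD
    apply mul_left_cancel₀ hn
    rw [hK]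
    field_simp
    field_simp at h
    linear_combination h
  have huc : Continuous u := by
    have : u = fun t => ∑ j ∈ Finset.Icc 1 N, a0 j * Real.cos ((2 * (j : ℝ) - 1) * t) := funext hu
    rw [this]; fun_prop
  have hvc : Continuous fun t => K * cos t * G N (cos t) ^ 2 := by
    unfold G; fun_prop
  have hne : ∀ t, 0 < t → t < π / 2 → t ≠ π / (N + 1) / 2 → cos (2 * t) ≠ cos (π / (N + 1)) := by
    intro t h0 h1 h2 h3
    have := injOn_cos (Set.mem_Icc.2 ⟨by linarith, by linarith⟩)
      (Set.mem_Icc.2 ⟨hθ0.le, hθ1.le⟩) h3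
    apply h2; linarith
  have hform : ∀ t, 0 < t → t < π / 2 → u t = K * cos t * G N (cos t) ^ 2 := by
    intro t h0 h1
    by_cases h2 : t = π / (N + 1) / 2
    · have hev : u =ᶠ[nhdsWithin t {t}ᶜ] fun t => K * cos t * G N (cos t) ^ 2 := by
        have hm : Set.Ioo 0 (π / 2) ∈ nhdsWithin t {t}ᶜ :=
          mem_nhdsWithin_of_mem_nhds (Ioo_mem_nhds h0 h1)
        filter_upwards [hm, self_mem_nhdsWithin] with s hs hst
        exact hgen s (hne s hs.1 hs.2 (by rw [← h2]; exact hst))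
      exact ((huc.continuousAt.eventuallyEq_nhds_iff_eventuallyEq_nhdsNE
        hvc.continuousAt).1 hev).eq_of_nhds
    · exact hgen t (hne t h0 h1 h2)
  intro t₁ t₂ h0 h12 h2
  have hhalf : 3 * π / (2 * (N:ℝ) + 2) ≤ π / 2 := by
    rw [div_le_div_iff₀ (by positivity) (by positivity)]
    nlinarith
  have hc2 : 0 < cos t₂ := cos_pos_of_mem_Ioo ⟨by linarith, by linarith⟩
  have hc12 : cos t₂ < cos t₁ := cos_lt_cos_of_nonneg_of_le_pi h0.le (by linarith) h12
  have hG := G_pos N t₂ (h0.trans h12) h2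
  have hGm := G_mono N t₂ (cos t₁) (h0.trans h12) h2 hc12.le
  rw [hform t₁ h0 (by linarith), hform t₂ (by linarith) (by linarith)]
  refine ⟨?_, by positivity⟩
  have hsq : G N (cos t₂) ^ 2 ≤ G N (cos t₁) ^ 2 := pow_le_pow_left₀ hG.le hGm 2
  calc K * cos t₂ * G N (cos t₂) ^ 2 < K * cos t₁ * G N (cos t₂) ^ 2 := by gcongr
    _ ≤ K * cos t₁ * G N (cos t₁) ^ 2 := by
      have : 0 < cos t₁ := hc2.trans hc12
      gcongr
end

section
/- Let N ≥ 2 and let v(t) = ∑_{j=1}^{N} a⁰_j·sin((2j−1)t) with a⁰_j = ((N−j+2)·sin(πj/(N+1)) − (N−j+1)·sin(π(j−1)/(N+1)))/((N+1)·sin(π/(N+1))). Then v is strictly decreasing on the interval (π/(N+1), π/2]: for all π/(N+1) < t₁ < t₂ ≤ π/2, v(t₁) > v(t₂). -/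
open Real Finset

lemma aux_abs_sin (n : ℕ) (x : ℝ) : |Real.sin (n * x)| ≤ n * |Real.sin x| := by
  induction n with
  | zero => simp
  | succ n ih =>
    have h1 : ((n + 1 : ℕ) : ℝ) * x = n * x + x := by push_cast; ring
    rw [h1, Real.sin_add]
    have h2 := abs_add_le (Real.sin (n * x) * Real.cos x) (Real.cos (n * x) * Real.sin x)
    rw [abs_mul, abs_mul] at h2
    have h3 := Real.abs_cos_le_one x
    have h4 := Real.abs_cos_le_one (n * x)
    have h5 : |Real.sin (n * x)| * |Real.cos x| ≤ |Real.sin (n * x)| :=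
      mul_le_of_le_one_right (abs_nonneg _) h3
    have h6 : |Real.cos (n * x)| * |Real.sin x| ≤ |Real.sin x| :=
      mul_le_of_le_one_left (abs_nonneg _) h4
    push_cast
    linarith

set_option maxHeartbeats 1000000 in
lemma aux_core (h s c y : ℝ) (h0 : 0 < h) (h2 : h ≤ 1 / 2) (hs : 0 < s) (hc : 0 < c)
    (hsc : s ^ 2 + c ^ 2 = 1) (hch : c ≤ 1 - 2 * h ^ 2) (hy0 : 0 ≤ y)
    (hy1 : y ≤ 2 * h / 3) (hy2 : y ≤ 2 * c) :
    h ^ 2 * s * y * ((s ^ 2 - h ^ 2) + 4 * c ^ 2) < c * (s ^ 2 - h ^ 2) ^ 2 := by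
  have hs1 : s ≤ 1 - c ^ 2 / 2 := by nlinarith [sq_nonneg (c ^ 2)]
  have hu : h ^ 2 ≤ 1 / 4 := by nlinarith
  have hu0 : 0 < h ^ 2 := by positivity
  have hs2 : s ^ 2 = 1 - c ^ 2 := by linarith
  rw [hs2]
  obtain ⟨u, hu'⟩ : ∃ u, u = h ^ 2 := ⟨_, rfl⟩
  rw [← hu'] at hch hu hu0 ⊢
  have hQ : 0 < 1 - c ^ 2 - u := by nlinarith
  have hQ4 : 0 < 1 - c ^ 2 - u + 4 * c ^ 2 := by positivity
  rcases le_total c (1 / 5) with h5 | h5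
  · have hs1' : s ≤ 1 := by nlinarith
    have hc2 : c ^ 2 ≤ 1 / 25 := by nlinarith
    have e1 : u * s * y ≤ 1 / 4 * 1 * (2 * c) := by gcongr
    have e2 : u * s * y * ((1 - c ^ 2 - u) + 4 * c ^ 2)
        ≤ 1 / 4 * 1 * (2 * c) * ((1 - c ^ 2 - u) + 4 * c ^ 2) := by gcongr
    refine e2.trans_lt ?_
    have : 1 / 2 * ((1 - c ^ 2 - u) + 4 * c ^ 2) < (1 - c ^ 2 - u) ^ 2 := by
      have : 7 / 10 ≤ 1 - c ^ 2 - u := by linarith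
      nlinarith
    have := mul_lt_mul_of_pos_left this hc
    linarith
  · rcases le_total c (1 / 2) with h6 | h6
    · have e6 : 0 ≤ (1 - c ^ 2 / 2) := by linarith
      have e2 : u * s * y * ((1 - c ^ 2 - u) + 4 * c ^ 2)
          ≤ u * (1 - c ^ 2 / 2) * (1 / 3) * ((1 - c ^ 2 - u) + 4 * c ^ 2) := by
        gcongr ?_ * ?_ * ?_ * _
        all_goals first | exact hs1 | linarith
      refine e2.trans_lt ?_
      have hcc : 0 ≤ (c - 1 / 5) * (1 / 2 - c) := mul_nonneg (by linarith) (by linarith)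
      have e3 : u * ((1 - c ^ 2 - u) + 4 * c ^ 2) ≤ 1 / 4 * (3 / 4 + 3 * c ^ 2) := by
        nlinarith [mul_nonneg (sub_nonneg.2 hu) (by nlinarith : (0 : ℝ) ≤ 3 / 4 + 3 * c ^ 2 - u)]
      have e4 : (3 / 4 - c ^ 2) ^ 2 ≤ (1 - c ^ 2 - u) ^ 2 := by
        have : c ^ 2 ≤ 1 / 4 := by nlinarith
        apply pow_le_pow_left₀ <;> linarith
      have e5 : 1 / 4 * (3 / 4 + 3 * c ^ 2) * ((1 - c ^ 2 / 2) * (1 / 3))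
          < c * (3 / 4 - c ^ 2) ^ 2 := by
        nlinarith [mul_nonneg hcc hc.le, mul_nonneg hcc (sq_nonneg c),
          mul_nonneg hcc (pow_nonneg hc.le 3)]
      have e7 : 0 ≤ (1 - c ^ 2 / 2) * (1 / 3) := by positivity
      linarith [mul_le_mul_of_nonneg_right e3 e7, mul_le_mul_of_nonneg_left e4 hc.le]
    · obtain ⟨w, hw⟩ : ∃ w, w = (1 - c) / 2 := ⟨_, rfl⟩
      have hcw : c = 1 - 2 * w := by linarith
      have huw : u ≤ w := by linarith
      have hw4 : w ≤ 1 / 4 := by linarith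
      have hw0 : 0 < w := by linarith
      have e0 : h * s ≤ 2 * w * (1 - w / 2) := by
        refine (sq_le_sq₀ (by positivity) ?_).1 ?_
        · exact mul_nonneg (by linarith) (by linarith)
        have : (h * s) ^ 2 = u * (4 * w * (1 - w)) := by
          rw [mul_pow, ← hu', hs2, hcw]; ring
        rw [this]
        have : u * (4 * w * (1 - w)) ≤ w * (4 * w * (1 - w)) :=
          mul_le_mul_of_nonneg_right huw (mul_nonneg (by linarith) (by linarith))
        nlinarith [sq_nonneg (w ^ 2)]
      have e1 : u * s * y ≤ u * (2 / 3 * (2 * w * (1 - w / 2))) := by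
        have : s * y ≤ s * (2 * h / 3) := by gcongr
        rw [mul_assoc]
        refine mul_le_mul_of_nonneg_left ?_ hu0.le
        linarith
      have e2 := mul_le_mul_of_nonneg_right e1 hQ4.le
      refine e2.trans_lt ?_
      have e3 : u * ((1 - c ^ 2 - u) + 4 * c ^ 2) ≤ w * ((1 - c ^ 2 - w) + 4 * c ^ 2) := by
        have := mul_nonneg (sub_nonneg.2 huw)
          (by linarith [sq_nonneg c] : (0 : ℝ) ≤ 1 + 3 * c ^ 2 - u - w)
        linarith
      have e4 : (w * (3 - 4 * w)) ^ 2 ≤ (1 - c ^ 2 - u) ^ 2 := by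
        apply pow_le_pow_left₀
        · nlinarith
        · rw [hcw]; nlinarith
      have e5 : (3 * w - 4 * w ^ 2 + 4 * (1 - 2 * w) ^ 2) * (2 / 3 * (2 * (1 - w / 2)))
          < (1 - 2 * w) * (3 - 4 * w) ^ 2 := by
        nlinarith [mul_nonneg hw0.le (sub_nonneg.2 hw4), mul_nonneg (mul_nonneg hw0.le hw0.le) (sub_nonneg.2 hw4)]
      have e6 : 0 ≤ 2 / 3 * (2 * w * (1 - w / 2)) := by
        have : 0 ≤ 1 - w / 2 := by linarith
        positivity
      have e7 := mul_le_mul_of_nonneg_right e3 e6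
      have e8 := mul_le_mul_of_nonneg_left e4 hc.le
      have e9 := mul_lt_mul_of_pos_left e5 (pow_pos hw0 2)
      calc _ = u * ((1 - c ^ 2 - u) + 4 * c ^ 2) * (2 / 3 * (2 * w * (1 - w / 2))) := by ring
        _ ≤ _ := e7
        _ = w ^ 2 * ((3 * w - 4 * w ^ 2 + 4 * (1 - 2 * w) ^ 2) * (2 / 3 * (2 * (1 - w / 2)))) := by
          rw [hcw]; ring
        _ < _ := e9
        _ = c * (w * (3 - 4 * w)) ^ 2 := by rw [hcw]; ring
        _ ≤ _ := e8

lemma aux_D (n : ℕ) (θ φ : ℝ) :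
    (∑ j ∈ range (n + 1), Real.sin (j * θ) * Real.sin (j * φ)) * (2 * (Real.cos φ - Real.cos θ))
      = Real.sin ((n + 1) * φ) * Real.sin (n * θ) - Real.sin (n * φ) * Real.sin ((n + 1) * θ) := by
  induction n with
  | zero => simp
  | succ n ih =>
    rw [sum_range_succ, add_mul, ih]
    push_cast
    have a1 : ((n : ℝ) + 1 + 1) * φ = (n + 1) * φ + φ := by ring
    have a2 : ((n : ℝ) + 1 + 1) * θ = (n + 1) * θ + θ := by ring
    have a3 : (n : ℝ) * φ = (n + 1) * φ - φ := by ring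
    have a4 : (n : ℝ) * θ = (n + 1) * θ - θ := by ring
    rw [a1, a2, a3, a4, Real.sin_add, Real.sin_add, Real.sin_sub, Real.sin_sub]
    ring

lemma aux_S_s14 (m : ℕ) (x : ℝ) :
    2 * (1 - Real.cos x) * (∑ j ∈ range (m + 1), Real.sin (j * x))
      = Real.sin x + Real.sin (m * x) - Real.sin ((m + 1) * x) := by
  induction m with
  | zero => simp
  | succ n ih =>
    rw [sum_range_succ, mul_add, ih]
    push_cast
    have a1 : ((n : ℝ) + 1 + 1) * x = (n + 1) * x + x := by ring
    have a3 : (n : ℝ) * x = (n + 1) * x - x := by ring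
    rw [a1, a3, Real.sin_add, Real.sin_sub]
    ring

lemma aux_A (m : ℕ) (x : ℝ) :
    2 * (1 - Real.cos x) * (∑ j ∈ range m, ((m : ℝ) - j) * Real.sin (j * x))
      = m * Real.sin x - Real.sin (m * x) := by
  induction m with
  | zero => simp
  | succ n ih =>
    have : ∑ j ∈ range (n + 1), (((n + 1 : ℕ) : ℝ) - j) * Real.sin (j * x)
        = ∑ j ∈ range n, ((n : ℝ) - j) * Real.sin (j * x)
          + ∑ j ∈ range (n + 1), Real.sin (j * x) := by
      have : ∑ j ∈ range n, ((n : ℝ) - j) * Real.sin (j * x)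
        = ∑ j ∈ range (n + 1), ((n : ℝ) - j) * Real.sin (j * x) := by
        rw [sum_range_succ]; simp
      rw [this, ← sum_add_distrib]
      refine sum_congr rfl fun j _ => ?_
      push_cast; ring
    rw [this, mul_add, ih, aux_S_s14]
    push_cast; ring

/-- Abel-type rearrangement. -/
lemma aux_shift (n : ℕ) (M : ℝ) (u s : ℕ → ℝ) (hu : u 0 = 0) :
    ∑ j ∈ range n, ((M - j) * u (j + 1) - (M - j - 1) * u j) * s (j + 1)
      = ∑ j ∈ range (n + 1), u j * ((M - j) * (s j - s (j + 1)) + s j + s (j + 1))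
        - u n * s (n + 1) * (n + 1 - M) := by
  induction n with
  | zero => simp [hu]
  | succ n ih =>
    rw [sum_range_succ, ih, sum_range_succ _ (n + 1)]
    push_cast; ring

lemma aux_closed (N : ℕ) (hN : 2 ≤ N) (a0 : ℕ → ℝ)
    (ha0 : ∀ j, a0 j =
      (((N : ℝ) - j + 2) * Real.sin (π * j / (N + 1)) -
        ((N : ℝ) - j + 1) * Real.sin (π * (j - 1) / (N + 1))) /
      ((N + 1) * Real.sin (π / (N + 1))))
    (t θ : ℝ) (hθ : θ = π / (N + 1)) (E : ℝ) (hE : E = Real.cos θ - Real.cos (2 * t)) :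
    E ^ 2 * (N + 1) * (∑ j ∈ Finset.Icc 1 N, a0 j * Real.sin ((2 * (j : ℝ) - 1) * t))
      = (N + 1) * E * Real.sin t
        + Real.sin (2 * (N + 1) * t) * Real.cos t * (1 - Real.cos θ) := by
  have hM : (0 : ℝ) < N + 1 := by positivity
  have hMθ : ((N : ℝ) + 1) * θ = π := by rw [hθ]; field_simp
  have hsθ : 0 < Real.sin θ := by
    apply Real.sin_pos_of_pos_of_lt_pi
    · rw [hθ]; positivity
    · rw [hθ]; apply div_lt_self Real.pi_pos
      have : (2 : ℝ) ≤ N := by exact_mod_cast hN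
      linarith
  have hNθ : Real.sin (N * θ) = Real.sin θ := by
    have : (N : ℝ) * θ = π - θ := by linarith
    rw [this, Real.sin_pi_sub]
  -- step 1
  have h1 : ((N : ℝ) + 1) * Real.sin θ *
      (∑ j ∈ Finset.Icc 1 N, a0 j * Real.sin ((2 * (j : ℝ) - 1) * t))
      = ∑ j ∈ range (N + 1), Real.sin (j * θ) *
        (((N : ℝ) + 1 - j) * (Real.sin ((2 * (j : ℝ) - 1) * t)
          - Real.sin ((2 * ((j + 1 : ℕ) : ℝ) - 1) * t))
          + Real.sin ((2 * (j : ℝ) - 1) * t) + Real.sin ((2 * ((j + 1 : ℕ) : ℝ) - 1) * t)) := by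
    have key := aux_shift N ((N : ℝ) + 1) (fun j => Real.sin (j * θ))
      (fun j => Real.sin ((2 * (j : ℝ) - 1) * t)) (by simp)
    simp only [sub_self, mul_zero, sub_zero] at key
    rw [← key, mul_sum, ← Finset.Ico_add_one_right_eq_Icc, Finset.sum_Ico_eq_sum_range]
    refine sum_congr (by simp) fun j _ => ?_
    rw [ha0, ← hθ, add_comm 1 j]
    have b1 : π * ((j + 1 : ℕ) : ℝ) / (N + 1) = ((j + 1 : ℕ) : ℝ) * θ := by rw [hθ]; ring
    have b2 : π * (((j + 1 : ℕ) : ℝ) - 1) / (N + 1) = (j : ℝ) * θ := by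
      rw [hθ]; push_cast; ring
    rw [b1, b2]
    field_simp
    push_cast
    ring
  have h2 : ∑ j ∈ range (N + 1), Real.sin (j * θ) *
        (((N : ℝ) + 1 - j) * (Real.sin ((2 * (j : ℝ) - 1) * t)
          - Real.sin ((2 * ((j + 1 : ℕ) : ℝ) - 1) * t))
          + Real.sin ((2 * (j : ℝ) - 1) * t) + Real.sin ((2 * ((j + 1 : ℕ) : ℝ) - 1) * t))
      = 2 * Real.cos t * (∑ j ∈ range (N + 1), Real.sin (j * θ) * Real.sin (j * (2 * t)))
        - Real.sin t * (∑ j ∈ range (N + 1), (((N + 1 : ℕ) : ℝ) - j) * Real.sin (j * (2 * t + θ))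
          - ∑ j ∈ range (N + 1), (((N + 1 : ℕ) : ℝ) - j) * Real.sin (j * (2 * t - θ))) := by
    rw [← sum_sub_distrib, mul_sum, mul_sum, ← sum_sub_distrib]
    refine sum_congr rfl fun j _ => ?_
    have a1 : (2 * (j : ℝ) - 1) * t = j * (2 * t) - t := by ring
    have a2 : (2 * ((j + 1 : ℕ) : ℝ) - 1) * t = j * (2 * t) + t := by push_cast; ring
    rw [a1, a2, mul_add (j : ℝ) (2 * t) θ, mul_sub (j : ℝ) (2 * t) θ]
    simp only [Real.sin_add, Real.sin_sub]
    push_cast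
    ring
  have hD := aux_D N θ (2 * t)
  have hA1 := aux_A (N + 1) (2 * t + θ)
  have hA2 := aux_A (N + 1) (2 * t - θ)
  rw [h2] at h1
  set D := ∑ j ∈ range (N + 1), Real.sin (j * θ) * Real.sin (j * (2 * t))
  set A1 := ∑ j ∈ range (N + 1), (((N + 1 : ℕ) : ℝ) - j) * Real.sin (j * (2 * t + θ))
  set A2 := ∑ j ∈ range (N + 1), (((N + 1 : ℕ) : ℝ) - j) * Real.sin (j * (2 * t - θ))
  set V := ∑ j ∈ Finset.Icc 1 N, a0 j * Real.sin ((2 * (j : ℝ) - 1) * t)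
  push_cast at hA1 hA2
  have c1 : ((N : ℝ) + 1) * (2 * t + θ) = 2 * (N + 1) * t + π := by rw [← hMθ]; ring
  have c2 : ((N : ℝ) + 1) * (2 * t - θ) = 2 * (N + 1) * t - π := by rw [← hMθ]; ring
  have c3 : ((N : ℝ) + 1) * (2 * t) = 2 * (N + 1) * t := by ring
  rw [c1, Real.sin_add_pi, Real.sin_add, Real.cos_add] at hA1
  rw [c2, Real.sin_sub_pi, Real.sin_sub, Real.cos_sub] at hA2
  rw [hMθ, hNθ, c3, Real.sin_pi] at hD
  have q1 : Real.sin (2 * t) = 2 * Real.sin t * Real.cos t := Real.sin_two_mul t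
  have q2 : Real.cos (2 * t) = 1 - 2 * Real.sin t ^ 2 := by
    rw [Real.cos_two_mul, Real.cos_sq']; ring
  have q3 := Real.sin_sq_add_cos_sq t
  have q4 := Real.sin_sq_add_cos_sq θ
  have q5 := Real.sin_sq_add_cos_sq (2 * t)
  generalize Real.sin (2 * (N + 1) * t) = W at *
  generalize (N : ℝ) + 1 = M at *
  generalize Real.sin (2 * t) = sp at *
  generalize Real.cos (2 * t) = cp at *
  generalize Real.sin θ = st at *
  generalize Real.cos θ = ct at *
  have d1 : 2 * E * D = - (W * st) := by rw [hE]; linarith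
  have d2 : (1 - (cp * ct - sp * st)) * (1 - (cp * ct + sp * st)) = E ^ 2 := by
    rw [hE]; linear_combination (-(st ^ 2)) * q5 - (1 - cp ^ 2) * q4
  have d3 : E ^ 2 * (A1 - A2) = - (st * (M * E + W * sp)) := by
    have f1 : 2 * E ^ 2 * A1 = (1 - (cp * ct + sp * st)) * (M * (sp * ct + cp * st) - -W) := by
      rw [← hA1, ← d2]; ring
    have f2 : 2 * E ^ 2 * A2 = (1 - (cp * ct - sp * st)) * (M * (sp * ct - cp * st) - -W) := by
      rw [← hA2, ← d2]; ring
    have : 2 * (E ^ 2 * (A1 - A2)) = 2 * (- (st * (M * E + W * sp))) := by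
      have : 2 * (E ^ 2 * (A1 - A2)) = 2 * E ^ 2 * A1 - 2 * E ^ 2 * A2 := by ring
      rw [this, f1, f2, hE]
      linear_combination (-(2 * M * st * ct)) * q5
    linarith
  apply mul_left_cancel₀ hsθ.ne'
  have : st * (E ^ 2 * M * V) = E ^ 2 * (M * st * V) := by ring
  rw [this, h1]
  have : E ^ 2 * (2 * Real.cos t * D - Real.sin t * (A1 - A2))
      = Real.cos t * E * (2 * E * D) - Real.sin t * (E ^ 2 * (A1 - A2)) := by ring
  rw [this, d1, d3, q1, hE, q2]
  ring

lemma aux_h (N : ℕ) (hN : 2 ≤ N) : 1 / ((N : ℝ) + 1) ≤ 2 * Real.sin (π / (N + 1) / 2) / 3 := by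
  have hM : (3 : ℝ) ≤ N + 1 := by
    have : (2 : ℝ) ≤ N := by exact_mod_cast hN
    linarith
  generalize (N : ℝ) + 1 = M at *
  have hM0 : 0 < M := by linarith
  have hp := Real.pi_pos
  have := (strictConcaveOn_sin_Icc.concaveOn).2 (Set.mem_Icc.2 ⟨le_rfl, hp.le⟩ : (0:ℝ) ∈ Set.Icc 0 π)
    (Set.mem_Icc.2 ⟨by positivity, by linarith⟩ : π / 6 ∈ Set.Icc 0 π)
    (show 0 ≤ 1 - 3 / M by rw [sub_nonneg, div_le_one hM0]; exact hM)
    (show 0 ≤ 3 / M by positivity) (by ring)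
  simp only [smul_eq_mul, Real.sin_zero, mul_zero, zero_add, Real.sin_pi_div_six] at this
  have e : 3 / M * (π / 6) = π / M / 2 := by field_simp; norm_num
  rw [e] at this
  have : 3 / M * (1 / 2) = 3 / 2 * (1 / M) := by ring
  linarith

theorem extremal_im_decreasing (N : ℕ) (hN : 2 ≤ N) (a0 : ℕ → ℝ)
    (ha0 : ∀ j, a0 j =
      (((N : ℝ) - j + 2) * Real.sin (π * j / (N + 1)) -
        ((N : ℝ) - j + 1) * Real.sin (π * (j - 1) / (N + 1))) /
      ((N + 1) * Real.sin (π / (N + 1))))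
    (v : ℝ → ℝ)
    (hv : ∀ t, v t = ∑ j ∈ Finset.Icc 1 N, a0 j * Real.sin ((2 * (j : ℝ) - 1) * t)) :
    ∀ t₁ t₂ : ℝ, π / (N + 1) < t₁ → t₁ < t₂ → t₂ ≤ π / 2 → v t₁ > v t₂ := by
  intro t₁ t₂ ht1 ht12 ht2
  have hp := Real.pi_pos
  have hM : (3 : ℝ) ≤ N + 1 := by
    have : (2 : ℝ) ≤ N := by exact_mod_cast hN
    linarith
  have hM0 : (0 : ℝ) < N + 1 := by linarith
  obtain ⟨θ, hθ⟩ : ∃ θ, θ = π / ((N : ℝ) + 1) := ⟨_, rfl⟩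
  have hθ0 : 0 < θ := by rw [hθ]; positivity
  have hθ3 : θ ≤ π / 3 := by rw [hθ]; gcongr
  obtain ⟨h, hh⟩ : ∃ h, h = Real.sin (θ / 2) := ⟨_, rfl⟩
  have hh0 : 0 < h := by rw [hh]; exact Real.sin_pos_of_pos_of_lt_pi (by linarith) (by linarith)
  have hh2 : h ≤ 1 / 2 := by
    rw [hh, ← Real.sin_pi_div_six]
    exact Real.sin_le_sin_of_le_of_le_pi_div_two (by linarith) (by linarith) (by linarith)
  have hcθ : Real.cos θ = 1 - 2 * h ^ 2 := by
    have : θ = 2 * (θ / 2) := by ring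
    rw [this, Real.cos_two_mul, Real.cos_sq', hh]; ring
  have hhM : 1 / ((N : ℝ) + 1) ≤ 2 * h / 3 := by rw [hh, hθ]; exact aux_h N hN
  rw [← hθ] at ht1
  -- facts at points
  have hfacts : ∀ t, θ < t → t < π / 2 → 0 < Real.sin t ∧ 0 < Real.cos t ∧
      Real.cos t ≤ 1 - 2 * h ^ 2 ∧ 0 < Real.sin t ^ 2 - h ^ 2 := by
    intro t h1 h2
    have a1 : 0 < Real.sin t := Real.sin_pos_of_pos_of_lt_pi (by linarith) (by linarith)
    have a2 : 0 < Real.cos t := Real.cos_pos_of_mem_Ioo ⟨by linarith, h2⟩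
    have a3 : Real.cos t ≤ 1 - 2 * h ^ 2 := by
      rw [← hcθ]
      exact Real.cos_le_cos_of_nonneg_of_le_pi hθ0.le (by linarith) h1.le
    refine ⟨a1, a2, a3, ?_⟩
    have := Real.sin_sq_add_cos_sq t
    nlinarith
  have hclosed : ∀ t, θ < t → t < π / 2 → v t = Real.sin t / (2 * (Real.sin t ^ 2 - h ^ 2))
      + h ^ 2 * Real.cos t * Real.sin (2 * (N + 1) * t)
        / (2 * (N + 1) * (Real.sin t ^ 2 - h ^ 2) ^ 2) := by
    intro t h1 h2
    obtain ⟨a1, a2, a3, a4⟩ := hfacts t h1 h2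
    have := aux_closed N hN a0 ha0 t θ hθ _ rfl
    have hE : Real.cos θ - Real.cos (2 * t) = 2 * (Real.sin t ^ 2 - h ^ 2) := by
      rw [hcθ, Real.cos_two_mul, Real.cos_sq']; ring
    rw [← hv, hE, hcθ] at this
    have hQ := a4.ne'
    generalize Real.sin t ^ 2 - h ^ 2 = Q at *
    field_simp
    linear_combination this / 2
  have hderiv : ∀ t, θ < t → t < π / 2 → deriv v t < 0 := by
    intro t h1 h2
    obtain ⟨a1, a2, a3, a4⟩ := hfacts t h1 h2
    have hQ := a4.ne'
    have hev : v =ᶠ[nhds t] fun t => Real.sin t / (2 * (Real.sin t ^ 2 - h ^ 2))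
      + h ^ 2 * Real.cos t * Real.sin (2 * (N + 1) * t)
        / (2 * (N + 1) * (Real.sin t ^ 2 - h ^ 2) ^ 2) := by
      filter_upwards [Ioo_mem_nhds h1 h2] with x hx
      exact hclosed x hx.1 hx.2
    rw [hev.deriv_eq]
    have dQ : HasDerivAt (fun t => Real.sin t ^ 2 - h ^ 2) (2 * Real.sin t * Real.cos t) t := by
      have := ((Real.hasDerivAt_sin t).pow 2).sub_const (h ^ 2)
      simpa using this
    have dψ : HasDerivAt (fun t => Real.sin (2 * ((N : ℝ) + 1) * t))
        (Real.cos (2 * (N + 1) * t) * (2 * (N + 1))) t := by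
      have := ((hasDerivAt_id t).const_mul (2 * ((N : ℝ) + 1))).sin
      simpa using this
    have d1 := (Real.hasDerivAt_sin t).div (dQ.const_mul 2) (by positivity)
    have d2 := (((Real.hasDerivAt_cos t).const_mul (h ^ 2)).mul dψ).div
      ((dQ.pow 2).const_mul (2 * ((N : ℝ) + 1))) (by simp only [Pi.pow_apply]; positivity)
    have d := (d1.add d2).deriv
    have hfun : (fun t => Real.sin t / (2 * (Real.sin t ^ 2 - h ^ 2))
      + h ^ 2 * Real.cos t * Real.sin (2 * (N + 1) * t)
        / (2 * (N + 1) * (Real.sin t ^ 2 - h ^ 2) ^ 2)) = _ := rfl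
    refine lt_of_eq_of_lt (Eq.trans ?_ d) ?_
    · rfl
    have hsc := Real.sin_sq_add_cos_sq t
    have hy2 : |Real.sin (2 * ((N : ℝ) + 1) * t)| / (N + 1) ≤ 2 * Real.cos t := by
      have := aux_abs_sin (N + 1) (2 * t)
      push_cast at this
      rw [Real.sin_two_mul, abs_of_pos (by positivity : 0 < 2 * Real.sin t * Real.cos t)] at this
      rw [div_le_iff₀ hM0]
      have e : 2 * ((N : ℝ) + 1) * t = (N + 1) * (2 * t) := by ring
      rw [e]
      refine this.trans ?_
      have : Real.sin t ≤ 1 := Real.sin_le_one t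
      have : Real.sin t * (Real.cos t * (N + 1)) ≤ 1 * (Real.cos t * (N + 1)) := by gcongr
      linarith
    have hy1 : |Real.sin (2 * ((N : ℝ) + 1) * t)| / (N + 1) ≤ 2 * h / 3 := by
      refine le_trans ?_ hhM
      gcongr
      exact Real.abs_sin_le_one _
    have core := aux_core h (Real.sin t) (Real.cos t) _ hh0 hh2 a1 a2 hsc a3
      (by positivity) hy1 hy2
    have hcos := Real.cos_le_one (2 * ((N : ℝ) + 1) * t)
    have hneg := neg_abs_le (Real.sin (2 * ((N : ℝ) + 1) * t))
    simp only [Pi.pow_apply, Pi.mul_apply]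
    have hQdef : Real.sin t ^ 2 = (Real.sin t ^ 2 - h ^ 2) + h ^ 2 := by ring
    generalize hψ : Real.sin (2 * ((N : ℝ) + 1) * t) = W at *
    generalize Real.cos (2 * ((N : ℝ) + 1) * t) = X at *
    generalize hMM : (N : ℝ) + 1 = M at *
    generalize hQQ : Real.sin t ^ 2 - h ^ 2 = Q at *
    generalize hs : Real.sin t = s at *
    generalize hc : Real.cos t = c at *
    have goal' : 0 < c * (Q + 2 * h ^ 2 - 2 * h ^ 2 * X) * Q
        + h ^ 2 * s * (W / M) * (Q + 4 * c ^ 2) := by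
      have g1 : c * Q * Q ≤ c * (Q + 2 * h ^ 2 - 2 * h ^ 2 * X) * Q := by
        gcongr
        nlinarith [sq_nonneg h]
      have g2 : h ^ 2 * s * (-|W| / M) * (Q + 4 * c ^ 2)
          ≤ h ^ 2 * s * (W / M) * (Q + 4 * c ^ 2) := by
        gcongr
      have g3 : h ^ 2 * s * (-|W| / M) * (Q + 4 * c ^ 2)
        = -(h ^ 2 * s * (|W| / M) * (Q + 4 * c ^ 2)) := by ring
      nlinarith
    have : ∀ z : ℝ, z = -(c * (Q + 2 * h ^ 2 - 2 * h ^ 2 * X) * Q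
        + h ^ 2 * s * (W / M) * (Q + 4 * c ^ 2)) / (2 * Q ^ 3) → z < 0 := by
      intro z hz
      rw [hz]
      exact div_neg_of_neg_of_pos (by linarith) (by positivity)
    apply this
    push_cast
    field_simp
    linear_combination (-2 * c * Q * M) * hQdef
  have hcont : Continuous v := by
    have : v = fun t => ∑ j ∈ Finset.Icc 1 N, a0 j * Real.sin ((2 * (j : ℝ) - 1) * t) :=
      funext hv
    rw [this]; fun_prop
  have anti : StrictAntiOn v (Set.Icc t₁ t₂) := by
    apply strictAntiOn_of_deriv_neg (convex_Icc _ _) hcont.continuousOn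
    intro x hx
    rw [interior_Icc] at hx
    exact hderiv x (ht1.trans hx.1) (hx.2.trans_le ht2)
  exact anti ⟨le_rfl, ht12.le⟩ ⟨ht12.le, le_rfl⟩ ht12
end

section
/- Let N ≥ 2 and let v(t) = ∑_{j=1}^{N} a⁰_j·sin((2j−1)t) with a⁰_j = ((N−j+2)·sin(πj/(N+1)) − (N−j+1)·sin(π(j−1)/(N+1)))/((N+1)·sin(π/(N+1))). Then for every real t with sin²(t) ≠ sin²(π/(2N+2)), v(t) = (sin(t)/(sin²(t) − sin²(π/(2N+2)))) · (1/2 − cos²(t)·∏_{k=2}^{N} (1 − sin²(t)/sin²(kπ/(2N+2)))). -/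
open Real Finset

lemma aux_A_s15 (th t : ℝ) (n : ℕ) :
    (2 * (cos th - cos (2 * t))) * ∑ j ∈ Finset.range (n + 1), sin (j * th) * sin (j * (2 * t)) =
      sin ((n + 1) * th) * sin (n * (2 * t)) - sin (n * th) * sin ((n + 1) * (2 * t)) := by
  induction n with
  | zero => simp
  | succ n ih =>
    rw [Finset.sum_range_succ, mul_add, ih]
    push_cast
    have h1 : sin (((n : ℝ) + 1 + 1) * th) = 2 * cos th * sin ((n + 1) * th) - sin (n * th) := by
      rw [show ((n : ℝ) + 1 + 1) * th = (n + 1) * th + th by ring,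
        show (n : ℝ) * th = (n + 1) * th - th by ring, sin_add, sin_sub]
      ring
    have h2 : sin (((n : ℝ) + 1 + 1) * (2 * t)) =
        2 * cos (2 * t) * sin ((n + 1) * (2 * t)) - sin (n * (2 * t)) := by
      rw [show ((n : ℝ) + 1 + 1) * (2 * t) = (n + 1) * (2 * t) + 2 * t by ring,
        show (n : ℝ) * (2 * t) = (n + 1) * (2 * t) - 2 * t by ring, sin_add, sin_sub]
      ring
    rw [h1, h2]
    ring

lemma aux_F (M th t : ℝ) (n : ℕ) :
    (2 * (cos th - cos (2 * t))) * ∑ j ∈ Finset.Icc 1 n,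
      ((M - j + 1) * sin (j * th) - (M - j) * sin ((j - 1) * th)) * sin ((2 * (j : ℝ) - 1) * t) =
      -2 * sin t * ((M - n - 1) * (sin ((n + 1) * th) * cos (n * (2 * t))
          - sin (n * th) * cos ((n + 1) * (2 * t))) - M * sin th
        + 2 * sin (2 * t) * ∑ j ∈ Finset.range (n + 1), sin (j * th) * sin (j * (2 * t))
        + sin ((n + 1) * th) * cos (n * (2 * t)))
      + 2 * cos t * (sin ((n + 1) * th) * sin (n * (2 * t))
          - sin (n * th) * sin ((n + 1) * (2 * t)))
      + (2 * (cos th - cos (2 * t))) * (M - n - 1) * sin (n * th) * sin ((2 * n + 1) * t) := by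
  induction n with
  | zero => simp; right; ring
  | succ n ih =>
    rw [Finset.sum_range_succ, Finset.sum_Icc_succ_top (by omega), mul_add, ih]
    push_cast
    have h1 : sin (((n : ℝ) + 1 + 1) * th) = 2 * cos th * sin ((n + 1) * th) - sin (n * th) := by
      rw [show ((n : ℝ) + 1 + 1) * th = (n + 1) * th + th by ring,
        show (n : ℝ) * th = (n + 1) * th - th by ring, sin_add, sin_sub]
      ring
    rw [h1, show ((n : ℝ) + 1 - 1) * th = n * th by ring,
      show ((n : ℝ) + 1 + 1) * (2 * t) = (n + 1) * (2 * t) + 2 * t by ring,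
      show (n : ℝ) * (2 * t) = (n + 1) * (2 * t) - 2 * t by ring,
      show (2 * ((n : ℝ) + 1) - 1) * t = (n + 1) * (2 * t) - t by ring,
      show (2 * ((n : ℝ) + 1) + 1) * t = (n + 1) * (2 * t) + t by ring,
      show (2 * (n : ℝ) + 1) * t = (n + 1) * (2 * t) - t by ring]
    generalize ∑ j ∈ Finset.range (n + 1), sin (j * th) * sin (j * (2 * t)) = A
    generalize ((n : ℝ) + 1) * (2 * t) = q
    generalize sin (((n : ℝ) + 1) * th) = s1
    generalize sin ((n : ℝ) * th) = s0
    simp only [sin_add, sin_sub, cos_add, cos_sub, sin_two_mul, cos_two_mul]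
    have hc := sin_sq_add_cos_sq t
    generalize sin t = x at *
    generalize cos t = y at *
    generalize sin q = u at *
    generalize cos q = w at *
    generalize cos th = c at *
    generalize sin th = d at *
    generalize (n : ℝ) = m at *
    clear ih h1
    grind

lemma aux_P_s15 (N : ℕ) (t : ℝ) :
    sin ((2 * N + 2) * t) = 2 * (N + 1) * sin t * cos t *
      ∏ k ∈ Finset.Icc 1 N, (1 - sin t ^ 2 / sin (k * π / (2 * N + 2)) ^ 2) := by
  have hU : ∀ x : ℝ, (Polynomial.Chebyshev.U ℝ N).eval x =
      2 ^ N * ∏ k ∈ Finset.range N, (x - cos ((k + 1) * π / (N + 1))) := by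
    intro x
    have hr := Polynomial.Chebyshev.roots_U_real N
    have hnd := Polynomial.Chebyshev.roots_U_real_nodup N
    have hr2 : (Polynomial.Chebyshev.U ℝ N).roots =
        Multiset.map (fun k : ℕ ↦ cos ((k + 1) * π / (N + 1))) (.range N) := by
      rw [hr, Finset.image_val]
      exact Multiset.dedup_eq_self.mpr hnd
    have := Polynomial.C_leadingCoeff_mul_prod_multiset_X_sub_C
      (p := Polynomial.Chebyshev.U ℝ N) (by
        rw [hr2, Polynomial.Chebyshev.natDegree_U_natCast]; simp)
    rw [← this, hr2, Polynomial.Chebyshev.leadingCoeff_U_natCast, Multiset.map_map]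
    change Polynomial.eval x (_ * ∏ k ∈ Finset.range N, _) = _
    simp [Polynomial.eval_prod]
  have h1 := Polynomial.Chebyshev.U_eval_one (R := ℝ) (N : ℤ)
  rw [hU] at h1
  have h2 := Polynomial.Chebyshev.U_real_cos (2 * t) (N : ℤ)
  rw [hU] at h2
  push_cast at h1 h2
  rw [show ((2 : ℝ) * N + 2) * t = (N + 1) * (2 * t) by ring, ← h2, sin_two_mul]
  have h3 : ∏ k ∈ Finset.Icc 1 N, (1 - sin t ^ 2 / sin (k * π / (2 * N + 2)) ^ 2) =
      ∏ k ∈ Finset.range N, (1 - sin t ^ 2 / sin (((k : ℝ) + 1) * π / (2 * N + 2)) ^ 2) := by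
    have hg : ∀ (f : ℕ → ℝ) (n : ℕ), ∏ k ∈ Finset.Icc 1 n, f k = ∏ k ∈ Finset.range n, f (k + 1) := by
      intro f n
      induction n with
      | zero => simp
      | succ n ih => rw [Finset.prod_Icc_succ_top (by omega), Finset.prod_range_succ, ih]
    rw [hg]
    push_cast
    rfl
  have h4 : ∏ k ∈ Finset.range N, (cos (2 * t) - cos (((k : ℝ) + 1) * π / (N + 1))) =
      (∏ k ∈ Finset.range N, (1 - cos (((k : ℝ) + 1) * π / (N + 1)))) *
      ∏ k ∈ Finset.range N, (1 - sin t ^ 2 / sin (((k : ℝ) + 1) * π / (2 * N + 2)) ^ 2) := by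
    rw [← Finset.prod_mul_distrib]
    refine Finset.prod_congr rfl fun k hk => ?_
    have hk' : (k : ℝ) + 1 ≤ N := by exact_mod_cast Finset.mem_range.mp hk
    have hpos : 0 < sin (((k : ℝ) + 1) * π / (2 * N + 2)) := by
      apply sin_pos_of_pos_of_lt_pi
      · positivity
      · rw [div_lt_iff₀ (by positivity)]
        nlinarith [pi_pos]
    rw [show ((k : ℝ) + 1) * π / (N + 1) = 2 * (((k : ℝ) + 1) * π / (2 * N + 2)) by
      field_simp; try ring]
    rw [cos_two_mul, cos_two_mul, cos_sq', cos_sq']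
    generalize sin (((k : ℝ) + 1) * π / (2 * N + 2)) = z at *
    field_simp
    ring
  rw [h3, h4]
  generalize ∏ k ∈ Finset.range N, (1 - sin t ^ 2 / sin (((k : ℝ) + 1) * π / (2 * N + 2)) ^ 2) = R
  linear_combination (2 * sin t * cos t * R) * h1

theorem extremal_im_product_formula (N : ℕ) (hN : 2 ≤ N) (a0 : ℕ → ℝ)
    (ha0 : ∀ j, a0 j =
      (((N : ℝ) - j + 2) * Real.sin (π * j / (N + 1)) -
        ((N : ℝ) - j + 1) * Real.sin (π * (j - 1) / (N + 1))) /
      ((N + 1) * Real.sin (π / (N + 1))))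
    (v : ℝ → ℝ)
    (hv : ∀ t, v t = ∑ j ∈ Finset.Icc 1 N, a0 j * Real.sin ((2 * (j : ℝ) - 1) * t)) :
    ∀ t : ℝ, Real.sin t ^ 2 ≠ Real.sin (π / (2 * N + 2)) ^ 2 →
      v t = Real.sin t / (Real.sin t ^ 2 - Real.sin (π / (2 * N + 2)) ^ 2) *
        (1 / 2 - Real.cos t ^ 2 *
          ∏ k ∈ Finset.Icc 2 N,
            (1 - Real.sin t ^ 2 / Real.sin (k * π / (2 * N + 2)) ^ 2)) := by
  intro t ht
  have hN0 : (0 : ℝ) < N := by exact_mod_cast (by omega : 0 < N)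
  have hP := aux_P_s15 N t
  rw [← Finset.mul_prod_Ioc_eq_prod_Icc (by omega : 1 ≤ N)] at hP
  have hI : Finset.Ioc 1 N = Finset.Icc 2 N := by ext; simp; omega
  rw [hI] at hP
  push_cast at hP
  rw [one_mul] at hP
  set P := ∏ k ∈ Finset.Icc 2 N, (1 - Real.sin t ^ 2 / Real.sin (k * π / (2 * N + 2)) ^ 2)
  have hA := aux_A_s15 (π / (N + 1)) t N
  have hF := aux_F (N + 1) (π / (N + 1)) t N
  have hv2 : ((N + 1) * sin (π / (N + 1))) * v t = ∑ j ∈ Finset.Icc 1 N,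
      (((N : ℝ) + 1 - j + 1) * sin (j * (π / (N + 1))) -
        ((N : ℝ) + 1 - j) * sin ((j - 1) * (π / (N + 1)))) * sin ((2 * (j : ℝ) - 1) * t) := by
    have hs : 0 < sin (π / ((N : ℝ) + 1)) := by
      apply sin_pos_of_pos_of_lt_pi
      · positivity
      · rw [div_lt_iff₀ (by positivity)]
        nlinarith [pi_pos]
    rw [hv, Finset.mul_sum]
    refine Finset.sum_congr rfl fun j _ => ?_
    rw [ha0, show π * (j : ℝ) / (N + 1) = j * (π / (N + 1)) by ring,
      show π * ((j : ℝ) - 1) / (N + 1) = (j - 1) * (π / (N + 1)) by ring]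
    field_simp
    ring
  rw [← hv2] at hF
  have e1 : sin (((N : ℝ) + 1) * (π / (N + 1))) = 0 := by
    rw [mul_div_cancel₀ _ (by positivity)]; exact sin_pi
  have e2 : sin ((N : ℝ) * (π / (N + 1))) = sin (π / (N + 1)) := by
    rw [← sin_pi_sub]; congr 1; field_simp; ring
  have e3 : ((N : ℝ) + 1) * (2 * t) = (2 * N + 2) * t := by ring
  rw [e1, e2, e3] at hA hF
  have hs : 0 < sin (π / ((N : ℝ) + 1)) := by
    apply sin_pos_of_pos_of_lt_pi
    · positivity
    · rw [div_lt_iff₀ (by positivity)]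
      nlinarith [pi_pos]
  have hz : 0 < sin (π / (2 * (N : ℝ) + 2)) := by
    apply sin_pos_of_pos_of_lt_pi
    · positivity
    · rw [div_lt_iff₀ (by positivity)]
      nlinarith [pi_pos]
  have e4 : cos (π / ((N : ℝ) + 1)) = 1 - 2 * sin (π / (2 * (N : ℝ) + 2)) ^ 2 := by
    rw [show π / ((N : ℝ) + 1) = 2 * (π / (2 * N + 2)) by field_simp; try ring, cos_two_mul, cos_sq']
    ring
  have e5 : cos (2 * t) = 1 - 2 * sin t ^ 2 := by rw [cos_two_mul, cos_sq']; ring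
  rw [e4, e5] at hA hF
  rw [sin_two_mul] at hF
  generalize ∑ j ∈ Finset.range (N + 1), sin (j * (π / ((N : ℝ) + 1))) * sin (j * (2 * t)) = A at *
  generalize sin ((2 * (N : ℝ) + 2) * t) = Q at *
  generalize sin (π / (2 * (N : ℝ) + 2)) = z at *
  generalize sin (π / ((N : ℝ) + 1)) = d at *
  have hD : sin t ^ 2 - z ^ 2 ≠ 0 := sub_ne_zero.mpr ht
  have hc := sin_sq_add_cos_sq t
  generalize sin t = x at *
  generalize cos t = y at *
  generalize v t = V at *
  have hQ : Q * z ^ 2 = -(2 * (N + 1) * x * y * (x ^ 2 - z ^ 2) * P) := by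
    rw [hP]; field_simp; ring
  -- `V D² = D x / 2 + z² y Q / (2 M)`
  have key : ((N + 1) * d) * (V * (x ^ 2 - z ^ 2) ^ 2) =
      ((N + 1) * d) * ((x ^ 2 - z ^ 2) * (x * (1 / 2 - y ^ 2 * P))) := by
    have h16 : 4 * (x ^ 2 - z ^ 2) * (((N : ℝ) + 1) * d * V) =
        -2 * x * (-(N + 1) * d + 4 * x * y * A) + 2 * y * (-(d * Q)) := by
      linear_combination hF
    have hA' : 4 * (x ^ 2 - z ^ 2) * A = -(d * Q) := by linear_combination hA
    linear_combination (1 / 4) * (x ^ 2 - z ^ 2) * h16 - (1 / 2) * x ^ 2 * y * hA' + (1 / 2) * d * y * hQ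
  have key2 := mul_left_cancel₀ (by positivity) key
  rw [eq_comm, div_mul_eq_mul_div, div_eq_iff hD]
  apply mul_left_cancel₀ hD
  linear_combination -key2
end
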